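/- If X ⊆ 𝒜^∞ is a d̄_M-stable shift space, then its measure center X^+ is transitive and the ergodic measures are entropy dense in M_σ(X). -/

import Mathlib

open MeasureTheory Filter Topology

namespace DbarPaper

variable {A : Type} [Fintype A] [DecidableEq A] [Inhabited A]
  [TopologicalSpace A] [DiscreteTopology A]
  [MeasurableSpace A] [MeasurableSingletonClass A]

/-- The shift map on the full shift `𝒜^∞ = ℕ → A`. -/
def shift : (ℕ → A) → (ℕ → A) := fun x n => x (n + 1)

/-- A shift space: a nonempty, closed, shift-invariant subset of the full shift. -/
def ShiftSpace (X : Set (ℕ → A)) : Prop :=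
  X.Nonempty ∧ IsClosed X ∧ ∀ x ∈ X, shift x ∈ X

/-- The word `w` appears in the sequence `x`. -/
def occursIn (w : List A) (x : ℕ → A) : Prop :=
  ∃ i : ℕ, w = List.ofFn (fun k : Fin w.length => x (i + (k : ℕ)))

/-- The language of a set `X`: all finite words appearing in points of `X`. -/
def lang (X : Set (ℕ → A)) : Set (List A) := {w | ∃ x ∈ X, occursIn w x}

/-- Words of length `n` in the language of `X`. -/
def langN (n : ℕ) (X : Set (ℕ → A)) : Set (List A) := {w | w ∈ lang X ∧ w.length = n}

/-- The pseudometric `d̄` on the full shift. -/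
noncomputable def dbar (x y : ℕ → A) : ℝ :=
  Filter.limsup
    (fun n => (((Finset.range n).filter (fun j => x j ≠ y j)).card : ℝ) / (n : ℝ))
    Filter.atTop

/-- Hausdorff "distance" between two sets induced by a `ℝ`-valued distance. -/
noncomputable def hausdist {Z : Type*} (d : Z → Z → ℝ) (P Q : Set Z) : ℝ :=
  max (⨆ p : P, ⨅ q : Q, d p q) (⨆ q : Q, ⨅ p : P, d p q)

/-- A probability measure is shift-invariant. -/
def invariantPM (μ : ProbabilityMeasure (ℕ → A)) : Prop :=
  (μ : Measure (ℕ → A)).map shift = (μ : Measure (ℕ → A))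

/-- `M_σ(X)`: shift-invariant Borel probability measures giving `X` full measure. -/
def Msigma (X : Set (ℕ → A)) : Set (ProbabilityMeasure (ℕ → A)) :=
  {μ | invariantPM μ ∧ μ X = 1}

/-- `ξ` is a joining of `μ` and `ν`: a `σ×σ`-invariant measure on the product with
marginals `μ` and `ν`. -/
def IsJoining (ξ : Measure ((ℕ → A) × (ℕ → A))) (μ ν : ProbabilityMeasure (ℕ → A)) : Prop :=
  ξ.map (Prod.map shift shift) = ξ ∧
  ξ.map Prod.fst = (μ : Measure (ℕ → A)) ∧ ξ.map Prod.snd = (ν : Measure (ℕ → A))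

/-- Ornstein's metric `d̄_M` on invariant measures. -/
noncomputable def dbarM (μ ν : ProbabilityMeasure (ℕ → A)) : ℝ :=
  sInf {r : ℝ | ∃ ξ : Measure ((ℕ → A) × (ℕ → A)),
    IsJoining ξ μ ν ∧ r = (ξ {p | p.1 0 ≠ p.2 0}).toReal}

/-- `d̄_M`-stability of a shift space (Austin). -/
def DbarMStable (X : Set (ℕ → A)) : Prop :=
  ∀ ε : ℝ, 0 < ε → ∃ U : Set (ProbabilityMeasure (ℕ → A)), IsOpen U ∧ Msigma X ⊆ U ∧
    ∀ ν ∈ U, invariantPM ν → ∃ μ ∈ Msigma X, dbarM μ ν < ε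

/-- The infinite concatenation of a sequence of (nonempty) words. -/
def concatSeq (w : ℕ → List A) : ℕ → A := fun n =>
  ((List.ofFn (fun i : Fin (n + 1) => w (i : ℕ))).flatten).getD n default

/-- The `d̄`-shadowing property. -/
def DbarShadowing (X : Set (ℕ → A)) : Prop :=
  ∀ ε : ℝ, 0 < ε → ∃ N : ℕ, 0 < N ∧ ∀ w : ℕ → List A,
    (∀ j, w j ∈ lang X) → (∀ j, N ≤ (w j).length) →
    ∃ x' ∈ X, dbar (concatSeq w) x' < ε

/-- `U_n(X)`: the union of cylinders of words of length `n` in the language of `X`. -/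
def cylNbhd (X : Set (ℕ → A)) (n : ℕ) : Set (ℕ → A) :=
  {x | List.ofFn (fun k : Fin n => x (k : ℕ)) ∈ lang X}

/-- The `n`-th (topological) Markov approximation of `X`: all sequences whose subwords of
length `n+1` belong to the language of `X`. -/
def markovApprox (X : Set (ℕ → A)) (n : ℕ) : Set (ℕ → A) :=
  {x | ∀ i : ℕ, List.ofFn (fun k : Fin (n + 1) => x (i + (k : ℕ))) ∈ lang X}

/-- Transitivity, in terms of the language. -/
def TransitiveShift (X : Set (ℕ → A)) : Prop :=
  ∀ u ∈ lang X, ∀ w ∈ lang X, ∃ v : List A, u ++ v ++ w ∈ lang X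

/-- Topological mixing, in terms of the language. -/
def MixingShift (X : Set (ℕ → A)) : Prop :=
  ∀ u ∈ lang X, ∀ w ∈ lang X, ∃ N : ℕ, ∀ m : ℕ, N ≤ m →
    ∃ v : List A, v.length = m ∧ u ++ v ++ w ∈ lang X

/-- Chain mixing: all but finitely many Markov approximations are topologically mixing. -/
def ChainMixing (X : Set (ℕ → A)) : Prop :=
  ∃ N : ℕ, ∀ n : ℕ, N ≤ n → MixingShift (markovApprox X n)

/-- `C` is the measure center of `X`: the smallest shift space contained in `X` of full
measure for every invariant measure of `X`. -/
def IsMeasureCenter (X C : Set (ℕ → A)) : Prop :=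
  ShiftSpace C ∧ C ⊆ X ∧ (∀ μ ∈ Msigma X, μ C = 1) ∧
  ∀ Y : Set (ℕ → A), ShiftSpace Y → Y ⊆ X → (∀ μ ∈ Msigma X, μ Y = 1) → C ⊆ Y

/-- Measure of the cylinder determined by a word of length `n`. -/
noncomputable def cylMeasure (μ : ProbabilityMeasure (ℕ → A)) {n : ℕ} (w : Fin n → A) : ℝ :=
  ((μ : Measure (ℕ → A)) {x | ∀ k : Fin n, x (k : ℕ) = w k}).toReal

/-- Entropy of the partition into cylinders of length `n`. -/
noncomputable def blockEntropy (μ : ProbabilityMeasure (ℕ → A)) (n : ℕ) : ℝ :=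
  -∑ w : Fin n → A, cylMeasure μ w * Real.log (cylMeasure μ w)

/-- Kolmogorov–Sinai entropy of a shift-invariant measure. -/
noncomputable def ksEntropy (μ : ProbabilityMeasure (ℕ → A)) : ℝ :=
  Filter.limsup (fun n => blockEntropy μ n / (n : ℝ)) Filter.atTop

/-- `μ` is ergodic for the shift. -/
def ErgodicPM (μ : ProbabilityMeasure (ℕ → A)) : Prop :=
  Ergodic shift (μ : Measure (ℕ → A))

/-- Ergodic measures are entropy dense in `M_σ(X)`. -/
def EntropyDense (X : Set (ℕ → A)) : Prop :=
  ∀ μ ∈ Msigma X, ∀ U : Set (ProbabilityMeasure (ℕ → A)), IsOpen U → μ ∈ U →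
    ∀ ε : ℝ, 0 < ε →
      ∃ ν ∈ Msigma X, ν ∈ U ∧ ErgodicPM ν ∧ |ksEntropy ν - ksEntropy μ| < ε

/-- Topological entropy of a shift space. -/
noncomputable def topEntropy (X : Set (ℕ → A)) : ℝ :=
  Filter.limsup (fun n => Real.log (Nat.card ↥(langN n X)) / (n : ℝ)) Filter.atTop

/-- The standard metric on the full shift. -/
noncomputable def rho (x y : ℕ → A) : ℝ :=
  open scoped Classical in
  if x = y then 0 else (2 : ℝ) ^ (-((sInf {j : ℕ | x j ≠ y j} : ℕ) : ℤ))

/-- Proximality of a shift space. -/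
def ProximalShift (X : Set (ℕ → A)) : Prop :=
  ∀ x ∈ X, ∀ y ∈ X,
    Filter.liminf (fun n => rho (shift^[n] x) (shift^[n] y)) Filter.atTop = 0

/-- Minimality of a shift space. -/
def MinimalShift (X : Set (ℕ → A)) : Prop :=
  ShiftSpace X ∧ ∀ Y : Set (ℕ → A), ShiftSpace Y → Y ⊆ X → Y = X

/-- An `A`-labeled directed multigraph on vertices `V` with edges `E`. -/
structure LabeledGraph (A V E : Type*) where
  src : E → V
  dst : E → V
  lab : E → A

namespace LabeledGraph

variable {A' V E : Type*}

/-- `es` is a path in `G` from `u` to `v`. -/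
def PathFromTo (G : LabeledGraph A' V E) (es : List E) (u v : V) : Prop :=
  es.Chain' (fun e f => G.dst e = G.src f) ∧
  es.head?.map G.src = some u ∧ es.getLast?.map G.dst = some v

/-- `G` is strongly connected. -/
def StronglyConnected (G : LabeledGraph A' V E) : Prop :=
  ∀ u v : V, ∃ es : List E, G.PathFromTo es u v

/-- `d` is the period of `G`: the gcd of lengths of closed paths. -/
def HasPeriod (G : LabeledGraph A' V E) (d : ℕ) : Prop :=
  (∀ (es : List E) (u : V), G.PathFromTo es u u → d ∣ es.length) ∧
  ∀ d' : ℕ, (∀ (es : List E) (u : V), G.PathFromTo es u u → d' ∣ es.length) → d' ∣ d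

/-- `b` is a safe symbol for `G`. -/
def SafeSymbol (G : LabeledGraph A' V E) (b : A') : Prop :=
  ∀ e : E, ∃ e' : E, G.src e' = G.src e ∧ G.dst e' = G.dst e ∧ G.lab e' = b

/-- The shift space presented by the labeled graph `G`: labels read along infinite paths. -/
def presents (G : LabeledGraph A' V E) : Set (ℕ → A') :=
  {x | ∃ e : ℕ → E, (∀ j, G.dst (e j) = G.src (e (j + 1))) ∧ ∀ j, x j = G.lab (e j)}

end LabeledGraph

/-- The coupling of a family of labeled graphs: an edge labeled `a` from `v` to `v'` exists
iff each `G k` has an edge from `v k` to `v' k` labeled `a`. -/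
def coupling {A' : Type*} {n : ℕ} {V E : Fin n → Type*}
    (G : ∀ k, LabeledGraph A' (V k) (E k)) :
    LabeledGraph A' (∀ k, V k) {p : (∀ k, E k) × A' // ∀ k, (G k).lab (p.1 k) = p.2} where
  src p := fun k => (G k).src (p.1.1 k)
  dst p := fun k => (G k).dst (p.1.1 k)
  lab p := p.1.2

/-- Sofic shift spaces: those presented by some finite labeled graph. -/
def Sofic (X : Set (ℕ → A)) : Prop :=
  ∃ (V E : Type) (_ : Fintype V) (_ : Fintype E) (G : LabeledGraph A V E),
    X = G.presents

/-- The coded shift generated by a finite set of words `B`: the closure of the set of all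
shifts of infinite concatenations of words from `B`. -/
def codedShift (B : Finset (List A)) : Set (ℕ → A) :=
  closure {x | ∃ (b : ℕ → List A) (k : ℕ), (∀ i, b i ∈ B) ∧ x = shift^[k] (concatSeq b)}

/-!
Given an invariant measure `μ`, concatenate independent blocks of length `n` distributed as the
first `n` coordinates under `μ`, and average over the `n` phases of the concatenation. The result
is an ergodic measure whose cylinder probabilities differ from those of `μ` by `O(1 / n)` and whose
entropy is the `n`-block entropy of `μ` divided by `n`, so it approximates `μ` weakly and in
entropy. Stability provides a measure in `M_σ(X)` which is `d̄_M`-close to this ergodic measure `ν`,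
but need not be ergodic. However, the joinings of members of `M_σ(X)` with `ν` form a weakly compact
face of the `σ × σ`-invariant measures, because `ν` is an extreme point of the invariant measures;
those of least cost form a compact subface, which contains an ergodic joining. Its first marginal is
ergodic, lies in `M_σ(X)`, and is as `d̄_M`-close to `ν` as required. Since `d̄_M` controls both
cylinder probabilities and entropy, this gives entropy density. For transitivity, an ergodic measure
close to a mean of two measures charging the cylinders of `u` and `w` charges both cylinders, and
almost every orbit through the former then visits the latter.
-/

section ShannonEntropy

open Real ProbabilityTheory

variable {Ω S T : Type*} [MeasurableSpace Ω] [Fintype S] [Fintype T]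

/-- The Shannon entropy, with respect to `P`, of the partition of `Ω` into the fibres of the
finite-valued random variable `Z`. -/
noncomputable def shannonEntropy (P : Measure Ω) (Z : Ω → S) : ℝ :=
  ∑ s, negMulLog (P.real (Z ⁻¹' {s}))

lemma shannonEntropy_nonneg (P : Measure Ω) [IsZeroOrProbabilityMeasure P] (Z : Ω → S) :
    0 ≤ shannonEntropy P Z :=
  Finset.sum_nonneg fun _ _ => negMulLog_nonneg measureReal_nonneg measureReal_le_one

lemma shannonEntropy_of_subsingleton (P : Measure Ω) [IsProbabilityMeasure P] [Subsingleton S]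
    (Z : Ω → S) : shannonEntropy P Z = 0 := by
  refine Finset.sum_eq_zero fun s _ => ?_
  simp [show Z ⁻¹' {s} = Set.univ from Set.eq_univ_of_forall fun _ => Subsingleton.elim _ _]

lemma negMulLog_sum_le {ι : Type*} {s : Finset ι} {p : ι → ℝ} (hp : ∀ i ∈ s, 0 ≤ p i) :
    negMulLog (∑ i ∈ s, p i) ≤ ∑ i ∈ s, negMulLog (p i) := by
  have hlog : ∑ i ∈ s, p i * log (p i) ≤ ∑ i ∈ s, p i * log (∑ j ∈ s, p j) := by
    refine Finset.sum_le_sum fun i hi => ?_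
    rcases (hp i hi).eq_or_lt with h0 | h0
    · simp [← h0]
    · exact mul_le_mul_of_nonneg_left (log_le_log h0 (Finset.single_le_sum hp hi)) h0.le
  rw [← Finset.sum_mul] at hlog
  simp only [negMulLog, neg_mul, Finset.sum_neg_distrib]
  linarith

lemma sum_negMulLog_le_neg_sum_mul_log {ι : Type*} {s : Finset ι} {p q : ι → ℝ}
    (hp : ∀ i ∈ s, 0 ≤ p i) (hq : ∀ i ∈ s, 0 ≤ q i) (hpq : ∀ i ∈ s, q i = 0 → p i = 0)
    (hsum : ∑ i ∈ s, q i ≤ ∑ i ∈ s, p i) :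
    ∑ i ∈ s, negMulLog (p i) ≤ -∑ i ∈ s, p i * log (q i) := by
  have hterm : ∀ i ∈ s, negMulLog (p i) + p i * log (q i) ≤ q i - p i := by
    intro i hi
    rcases (hp i hi).eq_or_lt with h0 | h0
    · simpa [← h0] using hq i hi
    · have hqi : 0 < q i := (hq i hi).lt_of_ne' fun h => h0.ne' (hpq i hi h)
      calc negMulLog (p i) + p i * log (q i) = p i * log (q i / p i) := by
            rw [log_div hqi.ne' h0.ne', negMulLog]; ring
        _ ≤ p i * (q i / p i - 1) :=
            mul_le_mul_of_nonneg_left (log_le_sub_one_of_pos (div_pos hqi h0)) h0.le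
        _ = q i - p i := by field_simp
  have := Finset.sum_le_sum hterm
  rw [Finset.sum_add_distrib, Finset.sum_sub_distrib] at this
  linarith

lemma sum_negMulLog_le_add_of_marginals {p : S → T → ℝ} (hp : ∀ s t, 0 ≤ p s t)
    (hsum : ∑ s, ∑ t, p s t = 1) :
    ∑ s, ∑ t, negMulLog (p s t) ≤
      ∑ s, negMulLog (∑ t, p s t) + ∑ t, negMulLog (∑ s, p s t) := by
  set a : S → ℝ := fun s => ∑ t, p s t with ha
  set b : T → ℝ := fun t => ∑ s, p s t with hb
  have hpa : ∀ s t, p s t ≤ a s := fun s t =>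
    Finset.single_le_sum (fun t _ => hp s t) (Finset.mem_univ t)
  have hpb : ∀ s t, p s t ≤ b t := fun s t =>
    Finset.single_le_sum (f := fun s => p s t) (fun s _ => hp s t) (Finset.mem_univ s)
  have hsum' : ∑ t, b t = 1 := by rw [← hsum, Finset.sum_comm]
  have hlog : ∀ s t, p s t * log (a s * b t) = p s t * log (a s) + p s t * log (b t) := by
    intro s t
    rcases (hp s t).eq_or_lt with h0 | h0
    · simp [← h0]
    · rw [log_mul (h0.trans_le (hpa s t)).ne' (h0.trans_le (hpb s t)).ne', mul_add]
  have hgibbs := sum_negMulLog_le_neg_sum_mul_log (s := Finset.univ)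
    (p := fun x : S × T => p x.1 x.2) (q := fun x => a x.1 * b x.2) (fun x _ => hp x.1 x.2)
    (fun x _ => mul_nonneg ((hp x.1 x.2).trans (hpa _ _)) ((hp x.1 x.2).trans (hpb _ _)))
    (fun x _ hx => (hp x.1 x.2).antisymm' <|
      (mul_eq_zero.1 hx).elim (fun h => h ▸ hpa x.1 x.2) fun h => h ▸ hpb x.1 x.2)
    (by simp only [Fintype.sum_prod_type, ← Finset.sum_mul_sum, hsum', mul_one, le_refl, ha])
  calc ∑ s, ∑ t, negMulLog (p s t) ≤ -∑ s, ∑ t, p s t * log (a s * b t) := by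
        simpa only [Fintype.sum_prod_type] using hgibbs
    _ = -((∑ s, a s * log (a s)) + ∑ t, b t * log (b t)) := by
        simp only [hlog, Finset.sum_add_distrib]
        rw [Finset.sum_comm (f := fun s t => p s t * log (b t))]
        simp only [← Finset.sum_mul, ha, hb]
    _ = ∑ s, negMulLog (a s) + ∑ t, negMulLog (b t) := by
        simp only [negMulLog, neg_mul, Finset.sum_neg_distrib, neg_add]

lemma shannonEntropy_prodMk (P : Measure Ω) (Z : Ω → S) (W : Ω → T) :
    shannonEntropy P (fun ω => (Z ω, W ω)) =
      ∑ s, ∑ t, negMulLog (P.real (Z ⁻¹' {s} ∩ W ⁻¹' {t})) := by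
  have hfibre : ∀ s t, (fun ω => (Z ω, W ω)) ⁻¹' {(s, t)} = Z ⁻¹' {s} ∩ W ⁻¹' {t} := by
    intro s t; ext ω; simp
  simp only [shannonEntropy, Fintype.sum_prod_type, hfibre]

variable [MeasurableSpace S] [MeasurableSingletonClass S]

lemma sum_measureReal_inter_preimage_singleton (P : Measure Ω) [IsFiniteMeasure P] {Z : Ω → S}
    (hZ : Measurable Z) (E : Set Ω) : ∑ s, P.real (E ∩ Z ⁻¹' {s}) = P.real E := by
  have hfibre : ∀ s, MeasurableSet (Z ⁻¹' {s}) := fun s => hZ (measurableSet_singleton s)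
  have := sum_measureReal_preimage_singleton (μ := P.restrict E) Finset.univ fun s _ => hfibre s
  simpa only [measureReal_restrict_apply (hfibre _), Finset.coe_univ, Set.preimage_univ,
    measureReal_restrict_apply_univ, Set.inter_comm _ E] using this

lemma sum_measureReal_preimage_singleton_eq_one (P : Measure Ω) [IsProbabilityMeasure P]
    {Z : Ω → S} (hZ : Measurable Z) : ∑ s, P.real (Z ⁻¹' {s}) = 1 := by
  simpa using sum_measureReal_inter_preimage_singleton P hZ Set.univ

lemma shannonEntropy_comp_le (P : Measure Ω) [IsFiniteMeasure P] {Z : Ω → S}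
    (hZ : Measurable Z) (f : S → T) :
    shannonEntropy P (fun ω => f (Z ω)) ≤ shannonEntropy P Z := by
  classical
  unfold shannonEntropy
  rw [← Finset.sum_fiberwise Finset.univ f]
  refine Finset.sum_le_sum fun t _ => ?_
  have hfibre : (fun ω => f (Z ω)) ⁻¹' {t} = Z ⁻¹' ({s | f s = t} : Finset S) := by
    ext ω; simp
  rw [hfibre, ← sum_measureReal_preimage_singleton _ fun s _ => hZ (measurableSet_singleton s)]
  exact negMulLog_sum_le fun _ _ => measureReal_nonneg

variable [MeasurableSpace T] [MeasurableSingletonClass T]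

lemma shannonEntropy_prodMk_le (P : Measure Ω) [IsProbabilityMeasure P] {Z : Ω → S} {W : Ω → T}
    (hZ : Measurable Z) (hW : Measurable W) :
    shannonEntropy P (fun ω => (Z ω, W ω)) ≤ shannonEntropy P Z + shannonEntropy P W := by
  have hfst : ∀ s, ∑ t, P.real (Z ⁻¹' {s} ∩ W ⁻¹' {t}) = P.real (Z ⁻¹' {s}) :=
    fun s => sum_measureReal_inter_preimage_singleton P hW _
  have hsnd : ∀ t, ∑ s, P.real (Z ⁻¹' {s} ∩ W ⁻¹' {t}) = P.real (W ⁻¹' {t}) := fun t => by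
    simpa only [Set.inter_comm] using sum_measureReal_inter_preimage_singleton P hZ (W ⁻¹' {t})
  have hle := sum_negMulLog_le_add_of_marginals
    (p := fun s t => P.real (Z ⁻¹' {s} ∩ W ⁻¹' {t})) (fun _ _ => measureReal_nonneg)
    (by simp only [hfst, sum_measureReal_preimage_singleton_eq_one P hZ])
  rw [shannonEntropy_prodMk]
  simpa only [shannonEntropy, hfst, hsnd] using hle

lemma shannonEntropy_prodMk_of_indepFun (P : Measure Ω) [IsProbabilityMeasure P] {Z : Ω → S}
    {W : Ω → T} (hZ : Measurable Z) (hW : Measurable W) (hind : IndepFun Z W P) :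
    shannonEntropy P (fun ω => (Z ω, W ω)) = shannonEntropy P Z + shannonEntropy P W := by
  have hmul : ∀ s t, P.real (Z ⁻¹' {s} ∩ W ⁻¹' {t}) =
      P.real (Z ⁻¹' {s}) * P.real (W ⁻¹' {t}) := fun s t => by
    simp only [measureReal_def, hind.measure_inter_preimage_eq_mul _ _
      (measurableSet_singleton s) (measurableSet_singleton t), ENNReal.toReal_mul]
  simp only [shannonEntropy_prodMk, hmul, negMulLog_mul, Finset.sum_add_distrib]
  simp only [← Finset.sum_mul, ← Finset.mul_sum, sum_measureReal_preimage_singleton_eq_one P hZ,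
    sum_measureReal_preimage_singleton_eq_one P hW, one_mul, shannonEntropy]

lemma shannonEntropy_pi_succ (P : Measure Ω) [IsFiniteMeasure P] {k : ℕ}
    {Z : Fin (k + 1) → Ω → S} (hZ : ∀ i, Measurable (Z i)) :
    shannonEntropy P (fun ω i => Z i ω) =
      shannonEntropy P (fun ω => (Z 0 ω, fun i : Fin k => Z i.succ ω)) := by
  apply le_antisymm
  · have hcons : (fun ω i => Z i ω) =
        fun ω => (Fin.cons (Z 0 ω) fun i : Fin k => Z i.succ ω : Fin (k + 1) → S) := by
      funext ω
      exact (Fin.cons_self_tail fun i => Z i ω).symm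
    rw [hcons]
    exact shannonEntropy_comp_le P
      ((hZ 0).prodMk (measurable_pi_iff.2 fun i : Fin k => hZ i.succ))
      fun q : S × (Fin k → S) => (Fin.cons q.1 q.2 : Fin (k + 1) → S)
  · exact shannonEntropy_comp_le P (measurable_pi_iff.2 hZ)
      fun w : Fin (k + 1) → S => (w 0, fun i : Fin k => w i.succ)

lemma shannonEntropy_pi_le (P : Measure Ω) [IsProbabilityMeasure P] {k : ℕ} {Z : Fin k → Ω → S}
    (hZ : ∀ i, Measurable (Z i)) :
    shannonEntropy P (fun ω i => Z i ω) ≤ ∑ i, shannonEntropy P (Z i) := by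
  induction k with
  | zero => simp [shannonEntropy_of_subsingleton]
  | succ k ih =>
    have htail : Measurable fun ω (i : Fin k) => Z i.succ ω :=
      measurable_pi_iff.2 fun i => hZ i.succ
    have hle := ih fun i => hZ i.succ
    rw [Fin.sum_univ_succ, shannonEntropy_pi_succ P hZ]
    linarith [shannonEntropy_prodMk_le P (hZ 0) htail]

lemma shannonEntropy_pi_of_iIndepFun (P : Measure Ω) [IsProbabilityMeasure P] {k : ℕ}
    {Z : Fin k → Ω → S} (hZ : ∀ i, Measurable (Z i)) (hind : iIndepFun Z P) :
    shannonEntropy P (fun ω i => Z i ω) = ∑ i, shannonEntropy P (Z i) := by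
  induction k with
  | zero => simp [shannonEntropy_of_subsingleton]
  | succ k ih =>
    have htail : Measurable fun ω (i : Fin k) => Z i.succ ω :=
      measurable_pi_iff.2 fun i => hZ i.succ
    have hsucc : ∀ i : Fin k, i.succ ∈ ({0}ᶜ : Finset (Fin (k + 1))) := fun i => by
      simp [Fin.succ_ne_zero]
    have hhead_tail : IndepFun (Z 0) (fun ω (i : Fin k) => Z i.succ ω) P := by
      have hφ : Measurable fun v : ({0} : Finset (Fin (k + 1))) → S =>
          v ⟨0, Finset.mem_singleton_self 0⟩ := measurable_pi_apply _
      have hψ : Measurable fun (v : ({0}ᶜ : Finset (Fin (k + 1))) → S) (i : Fin k) =>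
          v ⟨i.succ, hsucc i⟩ := measurable_pi_iff.2 fun i => measurable_pi_apply _
      exact (hind.indepFun_finset {0} {0}ᶜ disjoint_compl_right hZ).comp hφ hψ
    rw [Fin.sum_univ_succ, shannonEntropy_pi_succ P hZ,
      shannonEntropy_prodMk_of_indepFun P (hZ 0) htail hhead_tail,
      ih (fun i => hZ i.succ) (hind.precomp (Fin.succ_injective k))]

lemma shannonEntropy_map {Ω' : Type*} [MeasurableSpace Ω'] (P : Measure Ω) {Φ : Ω → Ω'}
    (hΦ : Measurable Φ) {Z : Ω' → S} (hZ : Measurable Z) :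
    shannonEntropy (P.map Φ) Z = shannonEntropy P (fun ω => Z (Φ ω)) :=
  Finset.sum_congr rfl fun s _ => by
    rw [map_measureReal_apply hΦ (hZ (measurableSet_singleton s)), Set.preimage_preimage]

lemma exists_pos_shannonEntropy_lt (s₀ : S) {ε : ℝ} (hε : 0 < ε) :
    ∃ δ : ℝ, 0 < δ ∧ ∀ (P : Measure Ω) [IsProbabilityMeasure P] {Z : Ω → S}, Measurable Z →
      P.real {ω | Z ω ≠ s₀} < δ → shannonEntropy P Z < ε := by
  set c : ℝ := ε / (Fintype.card S + 1)
  have hcard : (0 : ℝ) < Fintype.card S + 1 := by positivity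
  have hc : 0 < c := by positivity
  obtain ⟨δ₀, hδ₀, h0⟩ := Metric.continuous_iff.1 continuous_negMulLog 0 c hc
  obtain ⟨δ₁, hδ₁, h1⟩ := Metric.continuous_iff.1 continuous_negMulLog 1 c hc
  simp only [negMulLog_zero, negMulLog_one, dist_zero_right] at h0 h1
  refine ⟨min δ₀ δ₁, lt_min hδ₀ hδ₁, fun P _ Z hZ hlt => ?_⟩
  have hterm : ∀ s ∈ Finset.univ, negMulLog (P.real (Z ⁻¹' {s})) ≤ c := by
    intro s _
    refine (le_abs_self _).trans (le_of_lt ?_)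
    by_cases hs : s = s₀
    · have hcompl : P.real {ω | Z ω ≠ s₀} = 1 - P.real (Z ⁻¹' {s₀}) :=
        probReal_compl_eq_one_sub (hZ (measurableSet_singleton s₀))
      refine hs ▸ h1 _ ?_
      rw [Real.dist_eq, abs_sub_comm, abs_of_nonneg (sub_nonneg.2 measureReal_le_one), ← hcompl]
      exact hlt.trans_le (min_le_right _ _)
    · have hle : P.real (Z ⁻¹' {s}) ≤ P.real {ω | Z ω ≠ s₀} :=
        measureReal_mono fun ω (hω : Z ω = s) h => hs (hω.symm.trans h)
      refine h0 _ ?_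
      rw [norm_of_nonneg measureReal_nonneg]
      exact (hle.trans_lt hlt).trans_le (min_le_left _ _)
  calc shannonEntropy P Z ≤ Fintype.card S * c := by
        simpa [shannonEntropy] using Finset.sum_le_card_nsmul _ _ _ hterm
    _ < (Fintype.card S + 1) * c := by linarith
    _ = ε := mul_div_cancel₀ _ hcard.ne'

end ShannonEntropy

section Shift

variable {α : Type}

lemma shift_iterate_apply (x : ℕ → α) (i j : ℕ) : shift^[i] x j = x (i + j) := by
  induction i generalizing x with
  | zero => simp
  | succ i ih => rw [Function.iterate_succ_apply, ih, shift, Nat.add_right_comm]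

lemma measurable_shift [MeasurableSpace α] : Measurable (shift : (ℕ → α) → ℕ → α) :=
  measurable_pi_iff.2 fun n => measurable_pi_apply (n + 1)

lemma continuous_shift [TopologicalSpace α] : Continuous (shift : (ℕ → α) → ℕ → α) :=
  continuous_pi fun n => continuous_apply (n + 1)

lemma invariantPM.measurePreserving [MeasurableSpace α] {μ : ProbabilityMeasure (ℕ → α)}
    (hμ : invariantPM μ) : MeasurePreserving shift (μ : Measure (ℕ → α)) μ :=
  ⟨measurable_shift, hμ⟩

/-- The word formed by the first `m` symbols of a sequence. -/
def window (m : ℕ) (x : ℕ → α) : Fin m → α := fun k => x k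

lemma measurable_window [MeasurableSpace α] (m : ℕ) :
    Measurable (window m : (ℕ → α) → Fin m → α) :=
  measurable_pi_iff.2 fun _ => measurable_pi_apply _

lemma continuous_window [TopologicalSpace α] (m : ℕ) :
    Continuous (window m : (ℕ → α) → Fin m → α) :=
  continuous_pi fun _ => continuous_apply _

/-- The cylinder of all sequences starting with the word `w`. -/
def cyl {k : ℕ} (w : Fin k → α) : Set (ℕ → α) := window k ⁻¹' {w}

lemma mem_cyl_iff {k : ℕ} {w : Fin k → α} {x : ℕ → α} : x ∈ cyl w ↔ ∀ i : Fin k, x i = w i :=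
  funext_iff

lemma measurableSet_cyl [MeasurableSpace α] [MeasurableSingletonClass α] {k : ℕ} (w : Fin k → α) :
    MeasurableSet (cyl w) :=
  measurable_window k (measurableSet_singleton w)

lemma isClopen_cyl [TopologicalSpace α] [DiscreteTopology α] {k : ℕ} (w : Fin k → α) :
    IsClopen (cyl w) :=
  (isClopen_discrete {w}).preimage (continuous_window k)

lemma cylMeasure_eq [MeasurableSpace α] (μ : ProbabilityMeasure (ℕ → α)) {k : ℕ} (w : Fin k → α) :
    cylMeasure μ w = (μ : Measure (ℕ → α)).real (cyl w) := by
  simp only [cylMeasure, measureReal_def, ← mem_cyl_iff, Set.ofPred_mem_eq]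

lemma blockEntropy_eq_shannonEntropy_window [Fintype α] [MeasurableSpace α]
    (μ : ProbabilityMeasure (ℕ → α)) (m : ℕ) :
    blockEntropy μ m = shannonEntropy (μ : Measure (ℕ → α)) (window m) := by
  simp only [blockEntropy, shannonEntropy, Real.negMulLog, neg_mul, Finset.sum_neg_distrib,
    cylMeasure_eq, cyl]

end Shift

section BernoulliShift

open ProbabilityTheory

lemma preErgodic_of_measure_eq_zero_or_one {Ω : Type*} [MeasurableSpace Ω] {P : Measure Ω}
    [IsProbabilityMeasure P] {T : Ω → Ω}
    (h : ∀ E, MeasurableSet E → T ⁻¹' E = E → P E = 0 ∨ P E = 1) : PreErgodic T P where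
  aeconst_set E hE hinv := by
    rw [eventuallyConst_set]
    exact (h E hE hinv).symm.imp (fun h1 => (prob_compl_eq_zero_iff hE).2 h1)
      fun h0 => measure_eq_zero_iff_ae_notMem.1 h0

variable {β : Type} [MeasurableSpace β] (P : Measure β) [IsProbabilityMeasure P]

/-- The law of an i.i.d. sequence with common law `P`. -/
noncomputable abbrev iidLaw : Measure (ℕ → β) := Measure.infinitePi fun _ => P

lemma iIndepFun_eval_iidLaw : iIndepFun (fun (j : ℕ) (ω : ℕ → β) => ω j) (iidLaw P) :=
  iIndepFun_infinitePi (P := fun _ : ℕ => P) (X := fun _ b => b) fun _ => measurable_id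

lemma measurePreserving_shift_iidLaw : MeasurePreserving shift (iidLaw P) (iidLaw P) :=
  ⟨measurable_shift, Measure.map_infinitePi_infinitePi_of_inj (add_left_injective 1)⟩

lemma shannonEntropy_iidLaw_eval [Fintype β] [MeasurableSingletonClass β] (j : ℕ) :
    shannonEntropy (iidLaw P) (fun ω => ω j) = shannonEntropy P id :=
  (shannonEntropy_map (iidLaw P) (measurable_pi_apply j) measurable_id).symm.trans <| by
    rw [Measure.infinitePi_map_eval]

/-- Kolmogorov's zero–one law, since a shift-invariant set lies in the tail σ-algebra. -/
lemma ergodic_shift_iidLaw : Ergodic shift (iidLaw P) := by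
  refine ⟨measurePreserving_shift_iidLaw P,
    preErgodic_of_measure_eq_zero_or_one fun E hE hinv => ?_⟩
  refine measure_zero_or_one_of_measurableSet_limsup_atTop
    (fun j => (measurable_pi_apply j).comap_le) (iIndepFun_eval_iidLaw P).iIndep ?_
  rw [limsup_eq_iInf_iSup_of_nat, MeasurableSpace.measurableSet_iInf]
  intro k
  have hE_iterate : shift^[k] ⁻¹' E = E := by
    rw [Set.preimage_iterate_eq, Function.iterate_fixed hinv]
  rw [← hE_iterate]
  refine @measurable_pi_iff _ _ _ (_) _ _ |>.2 (fun j => ?_) hE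
  simp only [shift_iterate_apply]
  exact (comap_measurable fun ω : ℕ → β => ω (k + j)).mono
    (le_iSup₂_of_le (k + j) (Nat.le_add_right k j) le_rfl) le_rfl

end BernoulliShift

section Unblock

variable {α : Type} {n : ℕ} [NeZero n]

/-- The concatenation of the blocks `ω 0, ω 1, …`, with its first `i` symbols dropped. -/
def unblock (i : ℕ) (ω : ℕ → Fin n → α) : ℕ → α :=
  fun m => ω ((i + m) / n) (Fin.ofNat n (i + m))

lemma shift_unblock (i : ℕ) (ω : ℕ → Fin n → α) : shift (unblock i ω) = unblock (i + 1) ω := by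
  funext m
  simp only [shift, unblock, show i + (m + 1) = i + 1 + m by ring]

lemma unblock_eq_shift_iterate (i : ℕ) (ω : ℕ → Fin n → α) :
    unblock i ω = shift^[i] (unblock 0 ω) := by
  funext m
  rw [shift_iterate_apply]
  simp only [unblock, zero_add]

lemma unblock_blockLength (ω : ℕ → Fin n → α) : unblock n ω = unblock 0 (shift ω) := by
  funext m
  have hdiv : (n + m) / n = m / n + 1 := Nat.add_div_left _ (NeZero.pos n)
  have hmod : Fin.ofNat n (n + m) = Fin.ofNat n m := by
    ext; simp
  simp only [unblock, shift, hdiv, hmod, zero_add]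

lemma unblock_apply_mul_add_sub (i : Fin n) (ω : ℕ → Fin n → α) (j : ℕ) (r : Fin n) :
    unblock i ω ((j + 1) * n + r - i) = ω (j + 1) r := by
  have hle : (i : ℕ) ≤ (j + 1) * n + r := by
    have := i.2
    nlinarith
  have hdiv : ((j + 1) * n + r) / n = j + 1 := by
    rw [mul_comm, Nat.mul_add_div (NeZero.pos n), Nat.div_eq_of_lt r.2, add_zero]
  have hmod : Fin.ofNat n ((j + 1) * n + r) = r := by
    ext
    simp [Nat.mod_eq_of_lt r.2]
  simp only [unblock, Nat.add_sub_cancel' hle, hdiv, hmod]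

lemma unblock_apply_of_lt {i j : ℕ} (hij : i + j < n) (ω : ℕ → Fin n → α) :
    unblock i ω j = ω 0 ⟨i + j, hij⟩ := by
  have hmod : Fin.ofNat n (i + j) = ⟨i + j, hij⟩ := Fin.ext (Nat.mod_eq_of_lt hij)
  simp only [unblock, Nat.div_eq_of_lt hij, hmod]

lemma measurable_unblock [MeasurableSpace α] (i : ℕ) :
    Measurable (unblock i : (ℕ → Fin n → α) → ℕ → α) :=
  measurable_pi_iff.2 fun m => (measurable_pi_apply (Fin.ofNat n (i + m))).comp
    (measurable_pi_apply ((i + m) / n))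

lemma measurable_unblock_phase [MeasurableSpace α] :
    Measurable fun p : (ℕ → Fin n → α) × Fin n => unblock p.2 p.1 :=
  measurable_from_prod_countable_left fun i => measurable_unblock i

end Unblock

section StationaryConcatenation

open ProbabilityTheory
open scoped ENNReal

variable {α : Type} [MeasurableSpace α] {n : ℕ} (P : Measure (Fin n → α))

/-- The joint law of an i.i.d. sequence of blocks with law `P` and an independent uniform phase. -/
noncomputable def phasedLaw : Measure ((ℕ → Fin n → α) × Fin n) :=
  (n : ℝ≥0∞)⁻¹ • ∑ i : Fin n, (iidLaw P).map fun ω => (ω, i)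

lemma phasedLaw_map {β : Type*} [MeasurableSpace β] {f : (ℕ → Fin n → α) × Fin n → β}
    (hf : Measurable f) :
    (phasedLaw P).map f = (n : ℝ≥0∞)⁻¹ • ∑ i : Fin n, (iidLaw P).map fun ω => f (ω, i) := by
  rw [phasedLaw, Measure.map_smul, Measure.map_finset_sum hf.aemeasurable]
  congr 1
  refine Finset.sum_congr rfl fun i _ => ?_
  rw [Measure.map_map hf measurable_prodMk_right]
  rfl

variable [NeZero n]

lemma phasedLaw_map_fst : (phasedLaw P).map Prod.fst = iidLaw P := by
  rw [phasedLaw_map P measurable_fst]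
  simp only [Measure.map_id', Finset.sum_const, Finset.card_univ, Fintype.card_fin]
  rw [← Nat.cast_smul_eq_nsmul ℝ≥0∞, smul_smul, ENNReal.inv_mul_cancel
    (Nat.cast_ne_zero.2 (NeZero.ne n)) (ENNReal.natCast_ne_top n), one_smul]

lemma shannonEntropy_phasedLaw_comp_fst {S : Type*} [Fintype S] [MeasurableSpace S]
    [MeasurableSingletonClass S] {Z : (ℕ → Fin n → α) → S} (hZ : Measurable Z) :
    shannonEntropy (phasedLaw P) (fun p => Z p.1) = shannonEntropy (iidLaw P) Z := by
  rw [← shannonEntropy_map _ measurable_fst hZ, phasedLaw_map_fst]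

variable [IsProbabilityMeasure P]

instance : IsProbabilityMeasure (phasedLaw P) := by
  have : IsProbabilityMeasure ((phasedLaw P).map Prod.fst) := by
    rw [phasedLaw_map_fst]; infer_instance
  exact Measure.isProbabilityMeasure_of_map Prod.fst

/-- The stationary concatenation of independent blocks with law `P`: the infinite concatenation
of the blocks, started at a uniformly random position inside the first one. -/
noncomputable def stationaryConcat : ProbabilityMeasure (ℕ → α) :=
  ⟨(phasedLaw P).map fun p => unblock p.2 p.1,
    Measure.isProbabilityMeasure_map measurable_unblock_phase.aemeasurable⟩

lemma coe_stationaryConcat : (stationaryConcat P : Measure (ℕ → α)) =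
    (n : ℝ≥0∞)⁻¹ • ∑ i ∈ Finset.range n, (iidLaw P).map (unblock i) := by
  rw [Finset.sum_range]
  exact phasedLaw_map P measurable_unblock_phase

lemma invariantPM_stationaryConcat : invariantPM (stationaryConcat P) := by
  rw [invariantPM, coe_stationaryConcat, Measure.map_smul,
    Measure.map_finset_sum measurable_shift.aemeasurable]
  congr 1
  set ρ : ℕ → Measure (ℕ → α) := fun i => (iidLaw P).map (unblock i)
  have hshift : ∀ i, (ρ i).map shift = ρ (i + 1) := fun i => by
    rw [Measure.map_map measurable_shift (measurable_unblock i)]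
    exact congrArg (iidLaw P).map (funext (shift_unblock i))
  have hperiod : ρ n = ρ 0 := by
    have : (unblock n : (ℕ → Fin n → α) → ℕ → α) = unblock 0 ∘ shift :=
      funext unblock_blockLength
    simp only [ρ, this]
    rw [← Measure.map_map (measurable_unblock 0) measurable_shift,
      (measurePreserving_shift_iidLaw P).map_eq]
  suffices ∑ i ∈ Finset.range n, (ρ i).map shift = ∑ i ∈ Finset.range n, ρ i from this
  simp only [hshift]
  have htelescope := (Finset.sum_range_succ' ρ n).symm.trans (Finset.sum_range_succ ρ n)
  rw [hperiod] at htelescope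
  ext E -
  have hE := congrArg (fun κ : Measure (ℕ → α) => κ E) htelescope
  simp only [Measure.add_apply] at hE
  exact (ENNReal.add_left_inj (measure_ne_top _ _)).1 hE

lemma ergodicPM_stationaryConcat : ErgodicPM (stationaryConcat P) := by
  refine ⟨(invariantPM_stationaryConcat P).measurePreserving,
    preErgodic_of_measure_eq_zero_or_one fun E hE hinv => ?_⟩
  have hphase : ∀ i : ℕ, (unblock i : (ℕ → Fin n → α) → _) ⁻¹' E = unblock 0 ⁻¹' E := by
    intro i
    have hE_iterate : shift^[i] ⁻¹' E = E := by
      rw [Set.preimage_iterate_eq, Function.iterate_fixed hinv]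
    conv_rhs => rw [← hE_iterate]
    ext ω
    simp only [Set.mem_preimage, ← unblock_eq_shift_iterate]
  have hinv_blocks : shift ⁻¹' (unblock 0 ⁻¹' E : Set (ℕ → Fin n → α)) = unblock 0 ⁻¹' E := by
    conv_rhs => rw [← hphase n]
    ext ω
    simp only [Set.mem_preimage, unblock_blockLength]
  have hval : (stationaryConcat P : Measure (ℕ → α)) E = iidLaw P (unblock 0 ⁻¹' E) := by
    rw [coe_stationaryConcat]
    simp only [Measure.smul_apply, Measure.finsetSum_apply,
      Measure.map_apply (measurable_unblock _) hE, hphase, Finset.sum_const, Finset.card_range,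
      smul_eq_mul, nsmul_eq_mul]
    rw [← mul_assoc, ENNReal.inv_mul_cancel (Nat.cast_ne_zero.2 (NeZero.ne n))
      (ENNReal.natCast_ne_top n), one_mul]
  rw [hval]
  exact (ergodic_shift_iidLaw P).toPreErgodic.prob_eq_zero_or_one (measurable_unblock 0 hE)
    hinv_blocks

section Entropy

variable [Fintype α] [MeasurableSingletonClass α]

lemma blockEntropy_stationaryConcat (m : ℕ) : blockEntropy (stationaryConcat P) m =
    shannonEntropy (phasedLaw P) (fun p => window m (unblock p.2 p.1)) := by
  rw [blockEntropy_eq_shannonEntropy_window]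
  exact shannonEntropy_map (phasedLaw P) measurable_unblock_phase (measurable_window m)

lemma blockEntropy_stationaryConcat_le (m : ℕ) :
    blockEntropy (stationaryConcat P) m ≤
      shannonEntropy (phasedLaw P) Prod.snd + (m / n + 2 : ℕ) * shannonEntropy P id := by
  have hblock : ∀ j, Measurable fun p : (ℕ → Fin n → α) × Fin n => p.1 j := fun j =>
    (measurable_pi_apply j).comp measurable_fst
  have hblocks : Measurable fun (p : (ℕ → Fin n → α) × Fin n) (j : Fin (m / n + 2)) => p.1 j :=
    measurable_pi_iff.2 fun j => hblock j
  have hlt : ∀ (i : Fin n) (k : Fin m), ((i : ℕ) + k) / n < m / n + 2 := fun i k =>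
    calc ((i : ℕ) + k) / n ≤ (n + m) / n := Nat.div_le_div_right (by omega)
      _ = m / n + 1 := Nat.add_div_left _ (NeZero.pos n)
      _ < m / n + 2 := by omega
  calc blockEntropy (stationaryConcat P) m
      ≤ shannonEntropy (phasedLaw P) (fun p => (p.2, fun j : Fin (m / n + 2) => p.1 j)) := by
        rw [blockEntropy_stationaryConcat]
        exact shannonEntropy_comp_le (phasedLaw P) (measurable_snd.prodMk hblocks)
          fun (q : Fin n × (Fin (m / n + 2) → Fin n → α)) (k : Fin m) =>
            q.2 ⟨(q.1 + k) / n, hlt q.1 k⟩ (Fin.ofNat n (q.1 + k))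
    _ ≤ shannonEntropy (phasedLaw P) Prod.snd +
          ∑ j : Fin (m / n + 2), shannonEntropy (phasedLaw P) (fun p => p.1 j) :=
        (shannonEntropy_prodMk_le _ measurable_snd hblocks).trans
          (by gcongr; exact shannonEntropy_pi_le _ fun j => hblock j)
    _ = shannonEntropy (phasedLaw P) Prod.snd + (m / n + 2 : ℕ) * shannonEntropy P id := by
        have heval (j : ℕ) : shannonEntropy (phasedLaw P) (fun p => p.1 j) = shannonEntropy P id :=
          (shannonEntropy_phasedLaw_comp_fst P (measurable_pi_apply j)).trans
            (shannonEntropy_iidLaw_eval P j)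
        simp only [heval, Finset.sum_const, Finset.card_univ, Fintype.card_fin, nsmul_eq_mul]

lemma mul_shannonEntropy_le_add_blockEntropy_stationaryConcat (m : ℕ) :
    (m / n - 1 : ℕ) * shannonEntropy P id ≤
      shannonEntropy (phasedLaw P) Prod.snd + blockEntropy (stationaryConcat P) m := by
  set K := m / n - 1
  have hwindow : Measurable fun p : (ℕ → Fin n → α) × Fin n => window m (unblock p.2 p.1) :=
    (measurable_window m).comp measurable_unblock_phase
  have hlt : ∀ (i : Fin n) (j : Fin K) (r : Fin n), ((j : ℕ) + 1) * n + r - i < m := by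
    intro i j r
    have hblocks : ((j : ℕ) + 2) * n ≤ m / n * n := Nat.mul_le_mul_right n (by omega)
    have := Nat.div_mul_le_self m n
    have : ((j : ℕ) + 2) * n = (j + 1) * n + n := by ring
    omega
  have hread : (fun (p : (ℕ → Fin n → α) × Fin n) (j : Fin K) => p.1 (j + 1)) =
      fun (p : (ℕ → Fin n → α) × Fin n) (j : Fin K) (r : Fin n) =>
        window m (unblock p.2 p.1) ⟨(j + 1) * n + r - p.2, hlt p.2 j r⟩ := by
    funext p j r
    exact (unblock_apply_mul_add_sub p.2 p.1 j r).symm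
  have hind : iIndepFun (fun (j : Fin K) (ω : ℕ → Fin n → α) => ω (j + 1)) (iidLaw P) :=
    (iIndepFun_eval_iidLaw P).precomp ((add_left_injective 1).comp Fin.val_injective)
  calc K * shannonEntropy P id
      = shannonEntropy (iidLaw P) (fun ω (j : Fin K) => ω (j + 1)) := by
        rw [shannonEntropy_pi_of_iIndepFun _
          (fun j : Fin K => measurable_pi_apply ((j : ℕ) + 1)) hind]
        simp only [shannonEntropy_iidLaw_eval, Finset.sum_const, Finset.card_univ,
          Fintype.card_fin, nsmul_eq_mul]
    _ = shannonEntropy (phasedLaw P) (fun p (j : Fin K) => p.1 (j + 1)) :=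
        (shannonEntropy_phasedLaw_comp_fst P
          (measurable_pi_iff.2 fun j => measurable_pi_apply _)).symm
    _ ≤ shannonEntropy (phasedLaw P) (fun p => (p.2, window m (unblock p.2 p.1))) := by
        rw [hread]
        exact shannonEntropy_comp_le (phasedLaw P) (measurable_snd.prodMk hwindow)
          fun (q : Fin n × (Fin m → α)) (j : Fin K) (r : Fin n) =>
            q.2 ⟨(j + 1) * n + r - q.1, hlt q.1 j r⟩
    _ ≤ shannonEntropy (phasedLaw P) Prod.snd + blockEntropy (stationaryConcat P) m := by
        rw [blockEntropy_stationaryConcat]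
        exact shannonEntropy_prodMk_le _ measurable_snd hwindow

lemma tendsto_div_natCast_of_abs_sub_mul_le {a : ℕ → ℝ} {h C : ℝ}
    (ha : ∀ m, |a m - m * h| ≤ C) : Tendsto (fun m => a m / m) atTop (𝓝 h) := by
  rw [tendsto_iff_norm_sub_tendsto_zero]
  refine squeeze_zero' (Eventually.of_forall fun _ => norm_nonneg _) ?_
    (tendsto_const_div_atTop_nhds_zero_nat C)
  filter_upwards [eventually_gt_atTop 0] with m hm
  have hm' : (0 : ℝ) < m := Nat.cast_pos.2 hm
  rw [Real.norm_eq_abs, div_sub' hm'.ne', abs_div, abs_of_pos hm']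
  gcongr
  exact ha m

lemma ksEntropy_stationaryConcat :
    ksEntropy (stationaryConcat P) = shannonEntropy P id / n := by
  set H := shannonEntropy P id
  set I := shannonEntropy (phasedLaw P) Prod.snd
  have hH : 0 ≤ H := shannonEntropy_nonneg _ _
  have hn : (0 : ℝ) < n := Nat.cast_pos.2 (NeZero.pos n)
  refine (tendsto_div_natCast_of_abs_sub_mul_le (C := I + 2 * H) fun m => ?_).limsup_eq
  have hdiv_le : ((m / n : ℕ) : ℝ) ≤ m / n := Nat.cast_div_le
  have hlt_div : (m : ℝ) / n < (m / n : ℕ) + 1 := by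
    rw [div_lt_iff₀' hn]
    exact_mod_cast Nat.lt_mul_div_succ m (NeZero.pos n)
  have hsub : ((m / n : ℕ) : ℝ) - 1 ≤ ((m / n - 1 : ℕ) : ℝ) := by
    rw [sub_le_iff_le_add]
    exact_mod_cast (by omega : m / n ≤ m / n - 1 + 1)
  have hupper := blockEntropy_stationaryConcat_le P m
  have hlower := mul_shannonEntropy_le_add_blockEntropy_stationaryConcat P m
  rw [show (m : ℝ) * (H / n) = m / n * H by ring, abs_le]
  push_cast at hupper
  constructor <;> nlinarith

end Entropy

end StationaryConcatenation

section BlockApprox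

variable {α : Type} [MeasurableSpace α]

instance isProbabilityMeasure_map_window (P : Measure (ℕ → α)) [IsProbabilityMeasure P] (n : ℕ) :
    IsProbabilityMeasure (P.map (window n)) :=
  Measure.isProbabilityMeasure_map (measurable_window n).aemeasurable

lemma map_window_map_unblock {μ : ProbabilityMeasure (ℕ → α)} (hμ : invariantPM μ) {n : ℕ}
    [NeZero n] {i k : ℕ} (hik : i + k ≤ n) :
    ((iidLaw ((μ : Measure (ℕ → α)).map (window n))).map (unblock i)).map (window k) =
      (μ : Measure (ℕ → α)).map (window k) := by
  have hlt (j : Fin k) : i + (j : ℕ) < n := by omega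
  let subword (v : Fin n → α) (j : Fin k) : α := v ⟨i + j, hlt j⟩
  have hsubword : Measurable subword := measurable_pi_iff.2 fun _ => measurable_pi_apply _
  have hunblock : window k ∘ unblock i = subword ∘ fun ω => ω 0 :=
    funext fun ω => funext fun j => unblock_apply_of_lt (hlt j) ω
  have hiterate : subword ∘ window n = window k ∘ shift^[i] :=
    funext fun x => funext fun j => (shift_iterate_apply x i j).symm
  rw [Measure.map_map (measurable_window k) (measurable_unblock i), hunblock,
    ← Measure.map_map hsubword (measurable_pi_apply 0), Measure.infinitePi_map_eval,
    Measure.map_map hsubword (measurable_window n), hiterate,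
    ← Measure.map_map (measurable_window k) (measurable_shift.iterate i),
    (hμ.measurePreserving.iterate i).map_eq]

lemma abs_sum_range_div_sub_le {q : ℕ → ℝ} {p : ℝ} {n k : ℕ} [NeZero n]
    (heq : ∀ i, i + k ≤ n → q i = p) (hle : ∀ i, |q i - p| ≤ 1) :
    |(∑ i ∈ Finset.range n, q i) / n - p| ≤ k / n := by
  have hn : (0 : ℝ) < n := Nat.cast_pos.2 (NeZero.pos n)
  have hsupp : ∑ i ∈ Finset.Ico (n - k) n, (q i - p) = ∑ i ∈ Finset.range n, (q i - p) := by
    refine Finset.sum_subset (fun i hi => ?_) fun i hi hi' => ?_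
    · exact Finset.mem_range.2 (Finset.mem_Ico.1 hi).2
    · rw [Finset.mem_range] at hi
      rw [Finset.mem_Ico] at hi'
      rw [heq i (by omega), sub_self]
  have hsub :
      (∑ i ∈ Finset.range n, q i) / n - p = (∑ i ∈ Finset.Ico (n - k) n, (q i - p)) / n := by
    rw [hsupp, Finset.sum_sub_distrib, Finset.sum_const, Finset.card_range, nsmul_eq_mul,
      div_sub' hn.ne']
  rw [hsub, abs_div, abs_of_pos hn]
  gcongr
  calc |∑ i ∈ Finset.Ico (n - k) n, (q i - p)|
      ≤ ∑ i ∈ Finset.Ico (n - k) n, |q i - p| := Finset.abs_sum_le_sum_abs _ _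
    _ ≤ (Finset.Ico (n - k) n).card • (1 : ℝ) := Finset.sum_le_card_nsmul _ _ _ fun i _ => hle i
    _ ≤ k := by
      rw [Nat.card_Ico, nsmul_eq_mul, mul_one]
      exact_mod_cast (by omega : n - (n - k) ≤ k)

/-- The stationary concatenation of independent blocks of length `n` that are distributed like
the blocks of length `n` of `μ`. -/
noncomputable def blockApprox (μ : ProbabilityMeasure (ℕ → α)) (n : ℕ) [NeZero n] :
    ProbabilityMeasure (ℕ → α) :=
  stationaryConcat ((μ : Measure (ℕ → α)).map (window n))

variable (μ : ProbabilityMeasure (ℕ → α)) (n : ℕ) [NeZero n]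

lemma invariantPM_blockApprox : invariantPM (blockApprox μ n) := invariantPM_stationaryConcat _

lemma ergodicPM_blockApprox : ErgodicPM (blockApprox μ n) := ergodicPM_stationaryConcat _

lemma ksEntropy_blockApprox [Fintype α] [MeasurableSingletonClass α] :
    ksEntropy (blockApprox μ n) = blockEntropy μ n / n := by
  rw [blockEntropy_eq_shannonEntropy_window, blockApprox, ksEntropy_stationaryConcat,
    shannonEntropy_map _ (measurable_window n) measurable_id]
  rfl

variable {μ}

/-- Only the phases for which the cylinder straddles two blocks contribute to the error. -/
lemma abs_blockApprox_cyl_sub_le [MeasurableSingletonClass α] (hμ : invariantPM μ) {k : ℕ}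
    (w : Fin k → α) :
    |(blockApprox μ n : Measure (ℕ → α)).real (cyl w) - (μ : Measure (ℕ → α)).real (cyl w)| ≤
      k / n := by
  set ρ : ℕ → Measure (ℕ → α) := fun i =>
    (iidLaw ((μ : Measure (ℕ → α)).map (window n))).map (unblock i) with hρ
  have (i : ℕ) : IsProbabilityMeasure (ρ i) :=
    Measure.isProbabilityMeasure_map (measurable_unblock i).aemeasurable
  have haverage : (blockApprox μ n : Measure (ℕ → α)).real (cyl w) =
      (∑ i ∈ Finset.range n, (ρ i).real (cyl w)) / n := by
    rw [blockApprox, coe_stationaryConcat, measureReal_ennreal_smul_apply, measureReal_def,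
      Measure.finsetSum_apply, ENNReal.toReal_sum fun i _ => measure_ne_top _ _,
      ENNReal.toReal_inv, ENNReal.toReal_natCast, div_eq_inv_mul]
    rfl
  rw [haverage]
  refine abs_sum_range_div_sub_le (fun i hik => ?_) fun i =>
    abs_sub_le_of_nonneg_of_le measureReal_nonneg measureReal_le_one measureReal_nonneg
      measureReal_le_one
  simp only [cyl, ← map_measureReal_apply (measurable_window k) (measurableSet_singleton w), hρ,
    map_window_map_unblock hμ hik]

end BlockApprox

section EntropyRate

variable {α : Type} [Fintype α] [MeasurableSpace α]

lemma blockEntropy_nonneg (μ : ProbabilityMeasure (ℕ → α)) (m : ℕ) : 0 ≤ blockEntropy μ m := by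
  rw [blockEntropy_eq_shannonEntropy_window]
  exact shannonEntropy_nonneg _ _

lemma isCoboundedUnder_blockEntropy_div (μ : ProbabilityMeasure (ℕ → α)) :
    atTop.IsCoboundedUnder (· ≤ ·) fun m : ℕ => blockEntropy μ m / m :=
  IsBoundedUnder.isCoboundedUnder_le <|
    isBoundedUnder_of ⟨0, fun m => div_nonneg (blockEntropy_nonneg μ m) m.cast_nonneg⟩

variable [MeasurableSingletonClass α]

lemma blockEntropy_le_mul_card (μ : ProbabilityMeasure (ℕ → α)) (m : ℕ) :
    blockEntropy μ m ≤ m * Fintype.card α := by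
  have hsymbol (k : Fin m) :
      shannonEntropy (μ : Measure (ℕ → α)) (fun x => x k) ≤ Fintype.card α := by
    refine (Finset.sum_le_card_nsmul _ _ 1 fun a _ => ?_).trans_eq (by simp)
    exact (Real.negMulLog_le_one_sub_self measureReal_nonneg).trans
      (sub_le_self _ measureReal_nonneg)
  calc blockEntropy μ m
      ≤ ∑ k : Fin m, shannonEntropy (μ : Measure (ℕ → α)) (fun x => x k) := by
        rw [blockEntropy_eq_shannonEntropy_window]
        exact shannonEntropy_pi_le _ fun k => measurable_pi_apply _
    _ ≤ Fintype.card (Fin m) • (Fintype.card α : ℝ) :=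
        Finset.sum_le_card_nsmul _ _ _ fun k _ => hsymbol k
    _ = m * Fintype.card α := by rw [Fintype.card_fin, nsmul_eq_mul]

lemma isBoundedUnder_blockEntropy_div (μ : ProbabilityMeasure (ℕ → α)) :
    atTop.IsBoundedUnder (· ≤ ·) fun m : ℕ => blockEntropy μ m / m :=
  isBoundedUnder_of ⟨Fintype.card α, fun m => div_le_of_le_mul₀ m.cast_nonneg
    (Nat.cast_nonneg _) ((blockEntropy_le_mul_card μ m).trans_eq (mul_comm _ _))⟩

lemma ksEntropy_le_add {μ ν : ProbabilityMeasure (ℕ → α)} {η : ℝ}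
    (h : ∀ m : ℕ, blockEntropy μ m ≤ blockEntropy ν m + m * η) :
    ksEntropy μ ≤ ksEntropy ν + η := by
  rw [ksEntropy, ksEntropy, ← limsup_add_const atTop _ η (isBoundedUnder_blockEntropy_div ν)
    (isCoboundedUnder_blockEntropy_div ν)]
  refine limsup_le_limsup ?_ (isCoboundedUnder_blockEntropy_div μ)
    (isBoundedUnder_le_add (isBoundedUnder_blockEntropy_div ν) isBoundedUnder_const)
  filter_upwards [eventually_gt_atTop 0] with m hm
  have hm' : (0 : ℝ) < m := Nat.cast_pos.2 hm
  rw [div_add' _ _ _ hm'.ne', mul_comm η]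
  gcongr
  exact h m

end EntropyRate

section WeakTopology

variable {α : Type}

lemma mem_cyl_window (k : ℕ) (x : ℕ → α) : x ∈ cyl (window k x) := rfl

lemma cyl_inter_of_le {j k : ℕ} (hjk : j ≤ k) {v : Fin j → α} {w : Fin k → α}
    (h : (cyl v ∩ cyl w).Nonempty) : cyl v ∩ cyl w = cyl w := by
  obtain ⟨x, hv, hw⟩ := h
  refine Set.inter_eq_right.2 fun y hy => mem_cyl_iff.2 fun i => ?_
  rw [← mem_cyl_iff.1 hv i]
  exact (mem_cyl_iff.1 hy ⟨i, i.2.trans_le hjk⟩).trans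
    (mem_cyl_iff.1 hw ⟨i, i.2.trans_le hjk⟩).symm

lemma isPiSystem_cyl : IsPiSystem {s : Set (ℕ → α) | ∃ (k : ℕ) (w : Fin k → α), s = cyl w} := by
  rintro _ ⟨j, v, rfl⟩ _ ⟨k, w, rfl⟩ h
  rcases le_total j k with hjk | hkj
  · exact ⟨k, w, cyl_inter_of_le hjk h⟩
  · rw [Set.inter_comm] at h ⊢
    exact ⟨j, v, cyl_inter_of_le hkj h⟩

variable [TopologicalSpace α]

lemma exists_cyl_subset {u : Set (ℕ → α)} (hu : IsOpen u) {x : ℕ → α} (hx : x ∈ u) :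
    ∃ k : ℕ, cyl (window k x) ⊆ u := by
  obtain ⟨I, v, hI, hsub⟩ := isOpen_pi_iff.1 hu x hx
  obtain ⟨k, hk⟩ := I.exists_nat_subset_range
  refine ⟨k, fun y hy => hsub fun i hi => ?_⟩
  rw [mem_cyl_iff.1 hy ⟨i, Finset.mem_range.1 (hk hi)⟩]
  exact (hI i hi).2

variable [DiscreteTopology α] [Countable α] [MeasurableSpace α] [MeasurableSingletonClass α]

lemma tendsto_of_tendsto_cyl {μs : ℕ → ProbabilityMeasure (ℕ → α)}
    {μ : ProbabilityMeasure (ℕ → α)}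
    (h : ∀ (k : ℕ) (w : Fin k → α), Tendsto (fun n => (μs n : Measure (ℕ → α)).real (cyl w)) atTop
      (𝓝 ((μ : Measure (ℕ → α)).real (cyl w)))) :
    Tendsto μs atTop (𝓝 μ) := by
  refine isPiSystem_cyl.tendsto_probabilityMeasure_of_tendsto_of_mem ?_ ?_ ?_
  · rintro _ ⟨k, w, rfl⟩
    exact measurableSet_cyl w
  · intro u hu x hx
    obtain ⟨k, hk⟩ := exists_cyl_subset hu hx
    exact ⟨_, ⟨k, _, rfl⟩, (isClopen_cyl _).isOpen.mem_nhds (mem_cyl_window k x), hk⟩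
  · rintro _ ⟨k, w, rfl⟩
    exact NNReal.tendsto_coe.1 (h k w)

lemma exists_cyl_nhd {U : Set (ProbabilityMeasure (ℕ → α))} (hU : IsOpen U)
    {μ : ProbabilityMeasure (ℕ → α)} (hμ : μ ∈ U) :
    ∃ K : ℕ, ∃ δ : ℝ, 0 < δ ∧ ∀ ν : ProbabilityMeasure (ℕ → α),
      (∀ k ≤ K, ∀ w : Fin k → α, |(ν : Measure (ℕ → α)).real (cyl w) -
        (μ : Measure (ℕ → α)).real (cyl w)| < δ) → ν ∈ U := by
  by_contra! hcon
  choose ν hν hνU using fun n : ℕ => hcon n (1 / ((n : ℝ) + 1)) (by positivity)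
  have hlim : Tendsto ν atTop (𝓝 μ) := by
    refine tendsto_of_tendsto_cyl fun k w => tendsto_iff_dist_tendsto_zero.2 ?_
    refine squeeze_zero' (Eventually.of_forall fun _ => dist_nonneg) ?_
      (tendsto_one_div_add_atTop_nhds_zero_nat (𝕜 := ℝ))
    filter_upwards [eventually_ge_atTop k] with n hkn
    exact (hν n k hkn w).le
  obtain ⟨n, hn⟩ := (hlim.eventually (hU.mem_nhds hμ)).exists
  exact hνU n hn

lemma eventually_blockApprox_mem {μ : ProbabilityMeasure (ℕ → α)} (hμ : invariantPM μ)
    {U : Set (ProbabilityMeasure (ℕ → α))} (hU : IsOpen U) (hμU : μ ∈ U) :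
    ∀ᶠ n in atTop, ∀ [NeZero n], blockApprox μ n ∈ U := by
  obtain ⟨K, δ, hδ, hKU⟩ := exists_cyl_nhd hU hμU
  filter_upwards [(tendsto_const_div_atTop_nhds_zero_nat (K : ℝ)).eventually (gt_mem_nhds hδ)]
    with n hn _
  refine hKU _ fun k hk w => (abs_blockApprox_cyl_sub_le n hμ w).trans_lt (hn.trans_le' ?_)
  gcongr

end WeakTopology

section Joining

variable {α : Type}

lemma prodShift_iterate (i : ℕ) (p : (ℕ → α) × (ℕ → α)) :
    (Prod.map shift shift)^[i] p = (shift^[i] p.1, shift^[i] p.2) := by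
  rw [Prod.map_iterate]
  rfl

variable [MeasurableSpace α]

lemma measurable_prodShift :
    Measurable (Prod.map shift shift : (ℕ → α) × (ℕ → α) → (ℕ → α) × (ℕ → α)) :=
  measurable_shift.prodMap measurable_shift

variable {ξ : Measure ((ℕ → α) × (ℕ → α))} {μ ν : ProbabilityMeasure (ℕ → α)}

namespace IsJoining

lemma isProbabilityMeasure (h : IsJoining ξ μ ν) : IsProbabilityMeasure ξ := by
  have : IsProbabilityMeasure (ξ.map Prod.fst) := by
    rw [h.2.1]; infer_instance
  exact Measure.isProbabilityMeasure_of_map Prod.fst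

lemma measurePreserving (h : IsJoining ξ μ ν) : MeasurePreserving (Prod.map shift shift) ξ ξ :=
  ⟨measurable_prodShift, h.1⟩

lemma swap (h : IsJoining ξ μ ν) : IsJoining (ξ.map Prod.swap) ν μ := by
  refine ⟨?_, ?_, ?_⟩
  · rw [Measure.map_map measurable_prodShift measurable_swap]
    conv_rhs => rw [← h.1, Measure.map_map measurable_swap measurable_prodShift]
    rfl
  · rw [Measure.map_map measurable_fst measurable_swap]
    exact h.2.2
  · rw [Measure.map_map measurable_snd measurable_swap]
    exact h.2.1

end IsJoining

variable [Countable α] [MeasurableSingletonClass α]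

lemma measurableSet_ne (i : ℕ) : MeasurableSet {p : (ℕ → α) × (ℕ → α) | p.1 i ≠ p.2 i} :=
  (measurableSet_eq_fun ((measurable_pi_apply i).comp measurable_fst)
    ((measurable_pi_apply i).comp measurable_snd)).compl

lemma measureReal_map_swap_ne (ξ : Measure ((ℕ → α) × (ℕ → α))) (i : ℕ) :
    (ξ.map Prod.swap).real {p | p.1 i ≠ p.2 i} = ξ.real {p | p.1 i ≠ p.2 i} := by
  rw [map_measureReal_apply measurable_swap (measurableSet_ne i)]
  congr 1
  ext p
  exact ne_comm

namespace IsJoining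

lemma measureReal_ne (h : IsJoining ξ μ ν) (i : ℕ) :
    ξ.real {p | p.1 i ≠ p.2 i} = ξ.real {p | p.1 0 ≠ p.2 0} := by
  rw [← (h.measurePreserving.iterate i).measureReal_preimage (measurableSet_ne 0).nullMeasurableSet]
  simp only [Set.preimage_ofPred_eq, prodShift_iterate, shift_iterate_apply, add_zero]

lemma measureReal_cyl_le (h : IsJoining ξ μ ν) {k : ℕ} (w : Fin k → α) :
    (μ : Measure (ℕ → α)).real (cyl w) ≤
      (ν : Measure (ℕ → α)).real (cyl w) + k * ξ.real {p | p.1 0 ≠ p.2 0} := by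
  have := h.isProbabilityMeasure
  have hsub : (Prod.fst ⁻¹' cyl w : Set ((ℕ → α) × (ℕ → α))) ⊆
      Prod.snd ⁻¹' cyl w ∪ ⋃ i : Fin k, {p | p.1 i ≠ p.2 i} := by
    intro p hp
    by_cases hagree : ∀ i : Fin k, p.1 i = p.2 i
    · exact Or.inl (mem_cyl_iff.2 fun i => (hagree i).symm.trans (mem_cyl_iff.1 hp i))
    · exact Or.inr (Set.mem_iUnion.2 (not_forall.1 hagree))
  rw [← h.2.1, ← h.2.2, map_measureReal_apply measurable_fst (measurableSet_cyl w),
    map_measureReal_apply measurable_snd (measurableSet_cyl w)]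
  calc ξ.real (Prod.fst ⁻¹' cyl w)
      ≤ ξ.real (Prod.snd ⁻¹' cyl w) + ξ.real (⋃ i : Fin k, {p | p.1 i ≠ p.2 i}) :=
        (measureReal_mono hsub).trans (measureReal_union_le _ _)
    _ ≤ ξ.real (Prod.snd ⁻¹' cyl w) + ∑ i : Fin k, ξ.real {p | p.1 i ≠ p.2 i} := by
        gcongr
        exact measureReal_iUnion_fintype_le _
    _ = ξ.real (Prod.snd ⁻¹' cyl w) + k * ξ.real {p | p.1 0 ≠ p.2 0} := by
        simp only [h.measureReal_ne, Finset.sum_const, Finset.card_univ, Fintype.card_fin,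
          nsmul_eq_mul]

lemma abs_measureReal_cyl_sub_le (h : IsJoining ξ μ ν) {k : ℕ} (w : Fin k → α) :
    |(μ : Measure (ℕ → α)).real (cyl w) - (ν : Measure (ℕ → α)).real (cyl w)| ≤
      k * ξ.real {p | p.1 0 ≠ p.2 0} := by
  have hle := h.measureReal_cyl_le w
  have hge := h.swap.measureReal_cyl_le w
  rw [measureReal_map_swap_ne] at hge
  exact abs_sub_le_iff.2 ⟨by linarith, by linarith⟩

end IsJoining

end Joining

section Discrepancy

variable {α : Type}

/-- The symbol of the first sequence at `i` where the two sequences differ there, and `∅` where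
they agree. Singletons in `Set α` replace `Option α`, which carries no measurable structure. -/
def discrepancy (i : ℕ) (p : (ℕ → α) × (ℕ → α)) : Set α := {p.1 i} \ {p.2 i}

lemma discrepancy_eq_empty_iff {i : ℕ} {p : (ℕ → α) × (ℕ → α)} :
    discrepancy i p = ∅ ↔ p.1 i = p.2 i := by
  rw [discrepancy, Set.sdiff_eq_empty, Set.singleton_subset_singleton]

lemma exists_symbol_eq_of_discrepancy :
    ∃ f : α → Set α → α, ∀ (i : ℕ) (p : (ℕ → α) × (ℕ → α)),
      f (p.2 i) (discrepancy i p) = p.1 i := by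
  classical
  refine ⟨fun b D => if h : D.Nonempty then h.some else b, fun i p => ?_⟩
  dsimp only
  split_ifs with h
  · exact h.some_mem.1
  · exact (discrepancy_eq_empty_iff.1 (Set.not_nonempty_iff_eq_empty.1 h)).symm

variable [MeasurableSpace α] [MeasurableSingletonClass α]

lemma measurable_discrepancy [Countable α] (i : ℕ) :
    Measurable (discrepancy i : (ℕ → α) × (ℕ → α) → Set α) := by
  have hsymbols : Measurable fun p : (ℕ → α) × (ℕ → α) => (p.1 i, p.2 i) :=
    ((measurable_pi_apply i).comp measurable_fst).prodMk
      ((measurable_pi_apply i).comp measurable_snd)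
  have hdiff : Measurable fun q : α × α => ({q.1} \ {q.2} : Set α) := measurable_of_countable _
  exact hdiff.comp hsymbols

variable [Fintype α] {ξ : Measure ((ℕ → α) × (ℕ → α))} {μ ν : ProbabilityMeasure (ℕ → α)}

open scoped Classical in
lemma IsJoining.shannonEntropy_discrepancy (h : IsJoining ξ μ ν) (i : ℕ) :
    shannonEntropy ξ (discrepancy i) = shannonEntropy ξ (discrepancy 0) := by
  conv_rhs => rw [← (h.measurePreserving.iterate i).map_eq,
    shannonEntropy_map ξ (measurable_prodShift.iterate i) (measurable_discrepancy 0)]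
  simp only [discrepancy, prodShift_iterate, shift_iterate_apply, add_zero]
  rfl

open scoped Classical in
lemma IsJoining.blockEntropy_le (h : IsJoining ξ μ ν) (m : ℕ) :
    blockEntropy μ m ≤ blockEntropy ν m + m * shannonEntropy ξ (discrepancy 0) := by
  have := h.isProbabilityMeasure
  obtain ⟨f, hf⟩ := exists_symbol_eq_of_discrepancy (α := α)
  have hsnd : Measurable fun p : (ℕ → α) × (ℕ → α) => window m p.2 :=
    (measurable_window m).comp measurable_snd
  have hdiscrepancies :
      Measurable fun (p : (ℕ → α) × (ℕ → α)) (i : Fin m) => discrepancy i p :=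
    measurable_pi_iff.2 fun i => measurable_discrepancy i
  have hrecover : (fun p : (ℕ → α) × (ℕ → α) => window m p.1) =
      fun p i => f (window m p.2 i) (discrepancy i p) :=
    funext fun p => funext fun i => (hf i p).symm
  calc blockEntropy μ m
      = shannonEntropy ξ fun p => window m p.1 := by
        rw [blockEntropy_eq_shannonEntropy_window, ← h.2.1,
          shannonEntropy_map ξ measurable_fst (measurable_window m)]
    _ ≤ shannonEntropy ξ (fun p => (window m p.2, fun i : Fin m => discrepancy i p)) := by
        rw [hrecover]
        exact shannonEntropy_comp_le ξ (hsnd.prodMk hdiscrepancies)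
          fun (q : (Fin m → α) × (Fin m → Set α)) i => f (q.1 i) (q.2 i)
    _ ≤ shannonEntropy ξ (fun p => window m p.2) +
          ∑ i : Fin m, shannonEntropy ξ (discrepancy i) :=
        (shannonEntropy_prodMk_le ξ hsnd hdiscrepancies).trans
          (by gcongr; exact shannonEntropy_pi_le ξ fun i => measurable_discrepancy i)
    _ = blockEntropy ν m + m * shannonEntropy ξ (discrepancy 0) := by
        rw [blockEntropy_eq_shannonEntropy_window ν, ← h.2.2,
          shannonEntropy_map ξ measurable_snd (measurable_window m)]
        simp only [h.shannonEntropy_discrepancy, Finset.sum_const, Finset.card_univ,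
          Fintype.card_fin, nsmul_eq_mul]

lemma exists_pos_abs_ksEntropy_sub_lt {ε : ℝ} (hε : 0 < ε) :
    ∃ δ : ℝ, 0 < δ ∧ ∀ (ξ : Measure ((ℕ → α) × (ℕ → α))) (μ ν : ProbabilityMeasure (ℕ → α)),
      IsJoining ξ μ ν → ξ.real {p | p.1 0 ≠ p.2 0} < δ → |ksEntropy μ - ksEntropy ν| < ε := by
  classical
  obtain ⟨δ, hδ, hentropy⟩ :=
    exists_pos_shannonEntropy_lt (Ω := (ℕ → α) × (ℕ → α)) (∅ : Set α) hε
  have hlt (ξ : Measure ((ℕ → α) × (ℕ → α))) (μ ν : ProbabilityMeasure (ℕ → α))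
      (h : IsJoining ξ μ ν) (hne : ξ.real {p | p.1 0 ≠ p.2 0} < δ) :
      ksEntropy μ < ksEntropy ν + ε := by
    have := h.isProbabilityMeasure
    refine (ksEntropy_le_add h.blockEntropy_le).trans_lt ?_
    gcongr
    exact hentropy ξ (measurable_discrepancy 0) (by simpa only [ne_eq, discrepancy_eq_empty_iff])
  refine ⟨δ, hδ, fun ξ μ ν h hne => abs_sub_lt_iff.2 ⟨?_, ?_⟩⟩
  · linarith [hlt ξ μ ν h hne]
  · linarith [hlt _ ν μ h.swap (by rwa [measureReal_map_swap_ne])]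

end Discrepancy

section Faces

open scoped ENNReal BoundedContinuousFunction

variable {Ω : Type*} [MeasurableSpace Ω]

lemma isExtreme_setOf_measure_eq_zero (F : Set (Measure Ω)) (N : Set Ω) :
    IsExtreme ℝ≥0∞ F {ξ ∈ F | ξ N = 0} := by
  refine ⟨Set.sep_subset _ _, ?_⟩
  rintro ξ₁ h₁ ξ₂ - _ ⟨-, hN⟩ ⟨a, b, ha, -, -, rfl⟩
  simp only [Measure.add_apply, Measure.smul_apply, smul_eq_mul, add_eq_zero, mul_eq_zero] at hN
  exact ⟨h₁, hN.1.resolve_left ha.ne'⟩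

lemma isExtreme_setOf_map_eq {Ω' : Type*} [MeasurableSpace Ω'] {F : Set (Measure Ω)}
    {G : Set (Measure Ω')} {π : Ω → Ω'} (hπ : Measurable π) (hFG : ∀ ξ ∈ F, ξ.map π ∈ G)
    {ν : Measure Ω'} (hν : ν ∈ Set.extremePoints ℝ≥0∞ G) :
    IsExtreme ℝ≥0∞ F {ξ ∈ F | ξ.map π = ν} := by
  refine ⟨Set.sep_subset _ _, ?_⟩
  rintro ξ₁ h₁ ξ₂ h₂ _ ⟨-, hmap⟩ ⟨a, b, ha, hb, hab, rfl⟩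
  rw [Measure.map_add _ _ hπ, Measure.map_smul, Measure.map_smul] at hmap
  exact ⟨h₁, (mem_extremePoints_iff_left.1 hν).2 _ (hFG _ h₁) _ (hFG _ h₂)
    ⟨a, b, ha, hb, hab, hmap⟩⟩

lemma isExtreme_setOf_forall_measure_le {F : Set (Measure Ω)} {D : Set Ω}
    (hfin : ∀ ξ ∈ F, ξ D ≠ ∞) : IsExtreme ℝ≥0∞ F {ξ ∈ F | ∀ η ∈ F, ξ D ≤ η D} := by
  refine ⟨Set.sep_subset _ _, ?_⟩
  rintro ξ₁ h₁ ξ₂ h₂ ξ ⟨hξ, hmin⟩ ⟨a, b, ha, -, hab, heq⟩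
  refine ⟨h₁, fun η hη => le_trans (not_lt.1 fun hlt => ?_) (hmin η hη)⟩
  have ha_top : a ≠ ∞ := ne_top_of_le_ne_top ENNReal.one_ne_top (hab ▸ le_self_add)
  have hb_top : b ≠ ∞ := ne_top_of_le_ne_top ENNReal.one_ne_top (hab ▸ le_add_self)
  refine lt_irrefl (ξ D) ?_
  calc ξ D = a * ξ D + b * ξ D := by rw [← add_mul, hab, one_mul]
    _ < a * ξ₁ D + b * ξ₂ D :=
        ENNReal.add_lt_add_of_lt_of_le (ENNReal.mul_ne_top hb_top (hfin ξ hξ))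
          (ENNReal.mul_lt_mul_right ha.ne' ha_top hlt) (mul_le_mul_right (hmin ξ₂ h₂) b)
    _ = ξ D := by rw [← heq]; rfl

/-- The probability measures invariant under `T`, as a set of measures: a convex set whose
extreme points are the ergodic measures. -/
def invariantMeasures (T : Ω → Ω) : Set (Measure Ω) :=
  {ξ | MeasurePreserving T ξ ξ ∧ IsProbabilityMeasure ξ}

lemma map_mem_invariantMeasures {Ω' : Type*} [MeasurableSpace Ω'] {T : Ω → Ω} {S : Ω' → Ω'}
    (hS : Measurable S) {π : Ω → Ω'} (hπ : Measurable π) (hsemi : Function.Semiconj π T S)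
    {ξ : Measure Ω} (hξ : ξ ∈ invariantMeasures T) : ξ.map π ∈ invariantMeasures S := by
  have := hξ.2
  refine ⟨⟨hS, ?_⟩, Measure.isProbabilityMeasure_map hπ.aemeasurable⟩
  rw [Measure.map_map hS hπ, ← hsemi.comp_eq, ← Measure.map_map hπ hξ.1.measurable, hξ.1.map_eq]

variable [TopologicalSpace Ω] [HasOuterApproxClosed Ω]

/-- The weak topology embeds the probability measures into the locally convex space of functionals
on bounded continuous functions, where the Krein–Milman theorem applies. -/
lemma exists_mem_extremePoints_of_isCompact [BorelSpace Ω] {F : Set (Measure Ω)}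
    (hprob : ∀ ξ ∈ F, IsProbabilityMeasure ξ) (hne : F.Nonempty)
    (hcompact : IsCompact ((↑) ⁻¹' F : Set (ProbabilityMeasure Ω))) :
    ∃ ξ, ξ ∈ F.extremePoints ℝ≥0∞ := by
  let Φ (ξ : ProbabilityMeasure Ω) (f : Ω →ᵇ ℝ) : ℝ := ∫ x, f x ∂(ξ : Measure Ω)
  have hΦ : Continuous Φ := continuous_pi fun f =>
    ProbabilityMeasure.continuous_integral_boundedContinuousFunction f
  obtain ⟨ξ₀, hξ₀⟩ := hne
  obtain ⟨_, hextreme⟩ := (hcompact.image hΦ).extremePoints_nonempty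
    ⟨_, ⟨ξ₀, hprob ξ₀ hξ₀⟩, hξ₀, rfl⟩
  obtain ⟨⟨ξ, hξ, rfl⟩, hleft⟩ := mem_extremePoints_iff_left.1 hextreme
  refine ⟨ξ, mem_extremePoints_iff_left.2 ⟨hξ, ?_⟩⟩
  rintro ξ₁ h₁ ξ₂ h₂ ⟨a, b, ha, hb, hab, heq⟩
  have := hprob ξ₁ h₁
  have := hprob ξ₂ h₂
  have ha_top : a ≠ ∞ := ne_top_of_le_ne_top ENNReal.one_ne_top (hab ▸ le_self_add)
  have hb_top : b ≠ ∞ := ne_top_of_le_ne_top ENNReal.one_ne_top (hab ▸ le_add_self)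
  have hsegment : Φ ξ ∈ openSegment ℝ (Φ ⟨ξ₁, hprob ξ₁ h₁⟩) (Φ ⟨ξ₂, hprob ξ₂ h₂⟩) := by
    refine ⟨a.toReal, b.toReal, ENNReal.toReal_pos ha.ne' ha_top,
      ENNReal.toReal_pos hb.ne' hb_top, ?_, funext fun f => ?_⟩
    · rw [← ENNReal.toReal_add ha_top hb_top, hab, ENNReal.toReal_one]
    · simp only [Φ, ← heq]
      rw [integral_add_measure ((f.integrable ξ₁).smul_measure ha_top)
        ((f.integrable ξ₂).smul_measure hb_top), integral_smul_measure, integral_smul_measure]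
      rfl
  have hΦ_eq := hleft _ ⟨⟨ξ₁, hprob ξ₁ h₁⟩, h₁, rfl⟩ _ ⟨⟨ξ₂, hprob ξ₂ h₂⟩, h₂, rfl⟩ hsegment
  exact ext_of_forall_integral_eq_of_IsFiniteMeasure fun f => congrFun hΦ_eq f

lemma exists_ergodic_mem_of_isExtreme [BorelSpace Ω] {T : Ω → Ω} {F : Set (Measure Ω)}
    (hF : IsExtreme ℝ≥0∞ (invariantMeasures T) F) (hne : F.Nonempty)
    (hcompact : IsCompact ((↑) ⁻¹' F : Set (ProbabilityMeasure Ω))) :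
    ∃ ξ ∈ F, Ergodic T ξ := by
  obtain ⟨ξ, hξ⟩ :=
    exists_mem_extremePoints_of_isCompact (fun ξ hξ => (hF.subset hξ).2) hne hcompact
  exact ⟨ξ, extremePoints_subset hξ,
    Ergodic.of_mem_extremePoints (hF.extremePoints_subset_extremePoints hξ)⟩

lemma continuous_measure_of_isClopen [OpensMeasurableSpace Ω] {D : Set Ω} (hD : IsClopen D) :
    Continuous fun ξ : ProbabilityMeasure Ω => (ξ : Measure Ω) D := by
  refine continuous_iff_continuousAt.2 fun ξ => ?_
  simpa only [ContinuousAt, id_eq, ProbabilityMeasure.ennreal_coeFn_eq_coeFn_toMeasure] using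
    ENNReal.tendsto_coe.2
      (ProbabilityMeasure.tendsto_measure_of_isClopen_of_tendsto (tendsto_id (x := 𝓝 ξ)) hD)

lemma isClosed_setOf_measure_eq_zero [OpensMeasurableSpace Ω] {N : Set Ω} (hN : IsOpen N) :
    IsClosed {ξ : ProbabilityMeasure Ω | (ξ : Measure Ω) N = 0} := by
  refine isClosed_iff_ultrafilter.2 fun ξ u hu hmem => ?_
  have hzero : ∀ᶠ η : ProbabilityMeasure Ω in u, (η : Measure Ω) N = 0 := hmem
  refine le_antisymm ?_ zero_le
  calc (ξ : Measure Ω) N ≤ liminf (fun η : ProbabilityMeasure Ω => (η : Measure Ω) N) u :=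
        ProbabilityMeasure.le_liminf_measure_open_of_tendsto hu hN
    _ = 0 := (tendsto_const_nhds.congr' (hzero.mono fun _ h => h.symm)).liminf_eq

/-- The minimizers of a clopen event form a compact face, which contains an ergodic measure. -/
lemma exists_ergodic_forall_measure_le [BorelSpace Ω] {T : Ω → Ω} {F : Set (Measure Ω)}
    (hF : IsExtreme ℝ≥0∞ (invariantMeasures T) F) (hne : F.Nonempty)
    (hcompact : IsCompact ((↑) ⁻¹' F : Set (ProbabilityMeasure Ω))) {D : Set Ω}
    (hD : IsClopen D) : ∃ ξ ∈ F, Ergodic T ξ ∧ ∀ η ∈ F, ξ D ≤ η D := by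
  have hprob : ∀ ξ ∈ F, IsProbabilityMeasure ξ := fun ξ hξ => (hF.subset hξ).2
  have hcont := continuous_measure_of_isClopen hD
  have hface : IsExtreme ℝ≥0∞ F {ξ ∈ F | ∀ η ∈ F, ξ D ≤ η D} :=
    isExtreme_setOf_forall_measure_le fun ξ hξ => by
      have := hprob ξ hξ
      exact measure_ne_top ξ D
  have hface_ne : {ξ ∈ F | ∀ η ∈ F, ξ D ≤ η D}.Nonempty := by
    obtain ⟨ξ₀, hξ₀⟩ := hne
    obtain ⟨ξ, hξ, hmin⟩ := hcompact.exists_isMinOn ⟨⟨ξ₀, hprob ξ₀ hξ₀⟩, hξ₀⟩ hcont.continuousOn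
    exact ⟨ξ, hξ, fun η hη => hmin (a := ⟨η, hprob η hη⟩) hη⟩
  have hface_compact :
      IsCompact ((↑) ⁻¹' {ξ ∈ F | ∀ η ∈ F, ξ D ≤ η D} : Set (ProbabilityMeasure Ω)) := by
    have hclosed : IsClosed {ξ : ProbabilityMeasure Ω | ∀ η ∈ F, (ξ : Measure Ω) D ≤ η D} := by
      simp only [Set.ofPred_forall]
      exact isClosed_biInter fun η _ => isClosed_le hcont continuous_const
    exact hcompact.inter_right hclosed
  obtain ⟨ξ, ⟨hξ, hmin⟩, herg⟩ :=
    exists_ergodic_mem_of_isExtreme (hF.trans hface) hface_ne hface_compact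
  exact ⟨ξ, hξ, herg, hmin⟩

end Faces

section RelativeJoinings

open scoped ENNReal

lemma isClopen_setOf_apply_ne {α : Type*} [TopologicalSpace α] [DiscreteTopology α] (i : ℕ) :
    IsClopen {p : (ℕ → α) × (ℕ → α) | p.1 i ≠ p.2 i} :=
  (isClopen_discrete {q : α × α | q.1 ≠ q.2}).preimage
    (f := fun p : (ℕ → α) × (ℕ → α) => (p.1 i, p.2 i)) (by fun_prop)

variable {α : Type} [MeasurableSpace α]

/-- The `σ × σ`-invariant probability measures carried by `X × 𝒜^∞` with second marginal `ν`:
the joinings of members of `M_σ(X)` with `ν`. -/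
def joiningsOver (X : Set (ℕ → α)) (ν : ProbabilityMeasure (ℕ → α)) :
    Set (Measure ((ℕ → α) × (ℕ → α))) :=
  {ξ ∈ invariantMeasures (Prod.map shift shift) | ξ.map Prod.snd = ν} ∩
    {ξ ∈ invariantMeasures (Prod.map shift shift) | ξ (Prod.fst ⁻¹' X)ᶜ = 0}

lemma isExtreme_joiningsOver (X : Set (ℕ → α)) {ν : ProbabilityMeasure (ℕ → α)}
    (hν : ErgodicPM ν) :
    IsExtreme ℝ≥0∞ (invariantMeasures (Prod.map shift shift)) (joiningsOver X ν) :=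
  (isExtreme_setOf_map_eq measurable_snd
    (fun _ hξ => map_mem_invariantMeasures measurable_shift measurable_snd (fun _ => rfl) hξ)
    hν.mem_extremePoints).inter (isExtreme_setOf_measure_eq_zero _ _)

lemma mem_Msigma_iff {X : Set (ℕ → α)} {μ : ProbabilityMeasure (ℕ → α)} :
    μ ∈ Msigma X ↔ invariantPM μ ∧ (μ : Measure (ℕ → α)) X = 1 := by
  rw [Msigma, Set.mem_ofPred_eq, ← ProbabilityMeasure.ennreal_coeFn_eq_coeFn_toMeasure,
    ENNReal.coe_eq_one]

lemma isJoining_prod {μ ν : ProbabilityMeasure (ℕ → α)} (hμ : invariantPM μ)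
    (hν : invariantPM ν) : IsJoining ((μ : Measure (ℕ → α)).prod (ν : Measure (ℕ → α))) μ ν :=
  ⟨(hμ.measurePreserving.prod hν.measurePreserving).map_eq, measurePreserving_fst.map_eq,
    measurePreserving_snd.map_eq⟩

lemma IsJoining.mem_joiningsOver {ξ : Measure ((ℕ → α) × (ℕ → α))} {X : Set (ℕ → α)}
    {μ ν : ProbabilityMeasure (ℕ → α)} (hξ : IsJoining ξ μ ν) (hX : MeasurableSet X)
    (hμ : μ ∈ Msigma X) : ξ ∈ joiningsOver X ν := by
  have hinv : ξ ∈ invariantMeasures (Prod.map shift shift) :=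
    ⟨hξ.measurePreserving, hξ.isProbabilityMeasure⟩
  refine ⟨⟨hinv, hξ.2.2⟩, hinv, ?_⟩
  rw [← Set.preimage_compl, ← Measure.map_apply measurable_fst hX.compl, hξ.2.1,
    prob_compl_eq_zero_iff hX]
  exact (mem_Msigma_iff.1 hμ).2

variable [TopologicalSpace α] [DiscreteTopology α] [MeasurableSingletonClass α] [Finite α]

lemma isCompact_joiningsOver {X : Set (ℕ → α)} (hX : IsClosed X)
    (ν : ProbabilityMeasure (ℕ → α)) :
    IsCompact ((↑) ⁻¹' joiningsOver X ν : Set (ProbabilityMeasure ((ℕ → α) × (ℕ → α)))) := by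
  have hshift : Continuous (Prod.map shift shift : (ℕ → α) × (ℕ → α) → _) :=
    continuous_shift.prodMap continuous_shift
  have := ProbabilityMeasure.t2Space (ℕ → α)
  have := ProbabilityMeasure.t2Space ((ℕ → α) × (ℕ → α))
  have hinvariant := isClosed_eq (ProbabilityMeasure.continuous_map hshift) continuous_id
  have hmarginal := isClosed_eq (ProbabilityMeasure.continuous_map
    (continuous_snd (X := ℕ → α) (Y := ℕ → α))) (continuous_const (y := ν))
  have hcarried := isClosed_setOf_measure_eq_zero
    (hX.preimage (continuous_fst (Y := ℕ → α))).isOpen_compl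
  convert (hinvariant.inter (hmarginal.inter hcarried)).isCompact using 1
  ext ξ
  have hinv : (ξ : Measure ((ℕ → α) × (ℕ → α))) ∈ invariantMeasures (Prod.map shift shift) ↔
      ξ.map hshift.measurable.aemeasurable = ξ :=
    ⟨fun h => Subtype.ext h.1.map_eq,
      fun h => ⟨⟨hshift.measurable, congrArg Subtype.val h⟩, inferInstance⟩⟩
  have hmap : (ξ : Measure ((ℕ → α) × (ℕ → α))).map Prod.snd = ν ↔
      ξ.map measurable_snd.aemeasurable = ν :=
    ProbabilityMeasure.toMeasure_injective.eq_iff (a := ξ.map measurable_snd.aemeasurable)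
  simp only [joiningsOver, Set.mem_preimage, Set.mem_inter_iff, Set.mem_ofPred_eq, hinv, hmap]
  tauto

lemma exists_ergodic_isJoining {X : Set (ℕ → α)} (hX : IsClosed X)
    {μ ν : ProbabilityMeasure (ℕ → α)} (hμ : μ ∈ Msigma X) (hν : ErgodicPM ν) {ε : ℝ}
    (hε : dbarM μ ν < ε) :
    ∃ μ' ∈ Msigma X, ErgodicPM μ' ∧
      ∃ ξ, IsJoining ξ μ' ν ∧ ξ.real {p | p.1 0 ≠ p.2 0} < ε := by
  obtain ⟨_, ⟨ξ₀, hξ₀, rfl⟩, hlt⟩ := exists_lt_of_csInf_lt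
    (by exact ⟨_, _, isJoining_prod hμ.1 hν.map_eq, rfl⟩) hε
  have hmem := hξ₀.mem_joiningsOver hX.measurableSet hμ
  obtain ⟨ξ, ⟨⟨hξ, hmap⟩, -, hnull⟩, herg, hmin⟩ :=
    exists_ergodic_forall_measure_le (isExtreme_joiningsOver X hν) ⟨ξ₀, hmem⟩
      (isCompact_joiningsOver hX ν) (isClopen_setOf_apply_ne 0)
  have := hξ.2
  have := hξ₀.isProbabilityMeasure
  let μ' : ProbabilityMeasure (ℕ → α) :=
    ⟨ξ.map Prod.fst, Measure.isProbabilityMeasure_map measurable_fst.aemeasurable⟩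
  have herg' : ErgodicPM μ' := MeasurePreserving.ergodic_of_ergodic_semiconj (g := Prod.fst)
    ⟨measurable_fst, rfl⟩ herg measurable_shift fun _ => rfl
  have hfull : (μ' : Measure (ℕ → α)) X = 1 :=
    (Measure.map_apply measurable_fst hX.measurableSet).trans
      ((prob_compl_eq_zero_iff (measurable_fst hX.measurableSet)).1 hnull)
  refine ⟨μ', mem_Msigma_iff.2 ⟨herg'.map_eq, hfull⟩, herg', ξ, ⟨hξ.1.map_eq, rfl, hmap⟩, ?_⟩
  exact (ENNReal.toReal_mono (measure_ne_top _ _) (hmin ξ₀ hmem)).trans_lt hlt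

lemma exists_isOpen_forall_isJoining_mem {μ : ProbabilityMeasure (ℕ → α)}
    {U : Set (ProbabilityMeasure (ℕ → α))} (hU : IsOpen U) (hμU : μ ∈ U) :
    ∃ V : Set (ProbabilityMeasure (ℕ → α)), IsOpen V ∧ μ ∈ V ∧ ∃ δ > 0, ∀ ν ∈ V, ∀ ξ μ',
      IsJoining ξ μ' ν → ξ.real {p | p.1 0 ≠ p.2 0} < δ → μ' ∈ U := by
  obtain ⟨K, δ, hδ, hKU⟩ := exists_cyl_nhd hU hμU
  have hcont (k : ℕ) (w : Fin k → α) : Continuous fun ν : ProbabilityMeasure (ℕ → α) =>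
      |(ν : Measure (ℕ → α)).real (cyl w) - (μ : Measure (ℕ → α)).real (cyl w)| := by
    have hcyl : Continuous fun ν : ProbabilityMeasure (ℕ → α) =>
        (ν : Measure (ℕ → α)).real (cyl w) :=
      ENNReal.continuousOn_toReal.comp_continuous
        (continuous_measure_of_isClopen (isClopen_cyl w)) fun ν => measure_ne_top _ _
    fun_prop
  refine ⟨⋂ k ∈ Finset.range (K + 1), ⋂ w : Fin k → α, {ν | |(ν : Measure (ℕ → α)).real (cyl w) -
    (μ : Measure (ℕ → α)).real (cyl w)| < δ / 2}, ?_, ?_, δ / (2 * (K + 1)), by positivity, ?_⟩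
  · exact isOpen_biInter_finset fun k _ => isOpen_iInter_of_finite fun w =>
      isOpen_lt (hcont k w) continuous_const
  · simp [hδ]
  intro ν hν ξ μ' hξ hcost
  refine hKU μ' fun k hk w => ?_
  have hνμ := Set.mem_iInter.1 (Set.mem_iInter₂.1 hν k (Finset.mem_range_succ_iff.2 hk)) w
  have hμ'ν : |(μ' : Measure (ℕ → α)).real (cyl w) - (ν : Measure (ℕ → α)).real (cyl w)|
      ≤ δ / 2 := by
    have hkK : (k : ℝ) ≤ K + 1 := by exact_mod_cast hk.trans K.le_succ
    calc _ ≤ k * ξ.real {p | p.1 0 ≠ p.2 0} := hξ.abs_measureReal_cyl_sub_le w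
      _ ≤ (K + 1) * (δ / (2 * (K + 1))) := by gcongr
      _ = δ / 2 := by field_simp
  linarith [abs_sub_le ((μ' : Measure (ℕ → α)).real (cyl w))
    ((ν : Measure (ℕ → α)).real (cyl w)) ((μ : Measure (ℕ → α)).real (cyl w)), hνμ.out]

end RelativeJoinings

section EntropyDensity

variable {α : Type} [Fintype α] [MeasurableSpace α] [MeasurableSingletonClass α]

lemma frequently_abs_blockEntropy_div_sub_lt (μ : ProbabilityMeasure (ℕ → α)) {ε : ℝ}
    (hε : 0 < ε) : ∃ᶠ n : ℕ in atTop, |blockEntropy μ n / n - ksEntropy μ| < ε := by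
  have hlower : ∃ᶠ n : ℕ in atTop, ksEntropy μ - ε < blockEntropy μ n / n :=
    frequently_lt_of_lt_limsup (isCoboundedUnder_blockEntropy_div μ) (sub_lt_self _ hε)
  have hupper : ∀ᶠ n : ℕ in atTop, blockEntropy μ n / n < ksEntropy μ + ε :=
    eventually_lt_of_limsup_lt (lt_add_of_pos_right _ hε) (isBoundedUnder_blockEntropy_div μ)
  refine (hlower.and_eventually hupper).mono fun n hn => abs_lt.2 ⟨?_, ?_⟩
  · linarith [hn.1]
  · linarith [hn.2]

variable [TopologicalSpace α] [DiscreteTopology α]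

lemma entropyDense_univ : EntropyDense (Set.univ : Set (ℕ → α)) := by
  intro μ hμ U hU hμU ε hε
  obtain ⟨n, hent, hmem, hn⟩ := ((frequently_abs_blockEntropy_div_sub_lt μ hε).and_eventually
    ((eventually_blockApprox_mem hμ.1 hU hμU).and (eventually_ne_atTop 0))).exists
  have : NeZero n := ⟨hn⟩
  refine ⟨blockApprox μ n, ⟨invariantPM_blockApprox μ n, ProbabilityMeasure.coeFn_univ _⟩, hmem,
    ergodicPM_blockApprox μ n, ?_⟩
  rwa [ksEntropy_blockApprox]

lemma DbarMStable.entropyDense {X : Set (ℕ → α)} (hX : IsClosed X) (hstab : DbarMStable X) :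
    EntropyDense X := by
  intro μ hμ U hU hμU ε hε
  obtain ⟨V, hV, hμV, δ, hδ, hVU⟩ := exists_isOpen_forall_isJoining_mem hU hμU
  obtain ⟨η, hη, hent⟩ := exists_pos_abs_ksEntropy_sub_lt (α := α) (half_pos hε)
  obtain ⟨W, hW, hXW, hstabW⟩ := hstab (min δ η) (lt_min hδ hη)
  obtain ⟨ν, hν, ⟨hνV, hνW⟩, hνerg, hνμ⟩ :=
    entropyDense_univ μ ⟨hμ.1, ProbabilityMeasure.coeFn_univ μ⟩ (V ∩ W) (hV.inter hW)
      ⟨hμV, hXW hμ⟩ (ε / 2) (half_pos hε)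
  obtain ⟨μ₁, hμ₁, hdbar⟩ := hstabW ν hνW hν.1
  obtain ⟨μ', hμ', hμ'erg, ξ, hξ, hcost⟩ := exists_ergodic_isJoining hX hμ₁ hνerg hdbar
  refine ⟨μ', hμ', hVU ν hνV ξ μ' hξ (hcost.trans_le (min_le_left _ _)), hμ'erg, ?_⟩
  have hμ'ν := hent ξ μ' ν hξ (hcost.trans_le (min_le_right _ _))
  linarith [abs_sub_le (ksEntropy μ') (ksEntropy ν) (ksEntropy μ)]

end EntropyDensity

section Transitivity

variable {α : Type}

lemma ofFn_eq_map_range' (x : ℕ → α) (i n : ℕ) :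
    List.ofFn (fun k : Fin n => x (i + k)) = (List.range' i n).map x :=
  List.ext_getElem (by simp) (by simp)

lemma iterate_shift_mem_cyl_get_iff (w : List α) (x : ℕ → α) (i : ℕ) :
    shift^[i] x ∈ cyl w.get ↔ w = (List.range' i w.length).map x := by
  simp only [← ofFn_eq_map_range', mem_cyl_iff, shift_iterate_apply]
  rw [List.ext_get_iff]
  simp [Fin.forall_iff, eq_comm]

lemma occursIn_iff_exists_iterate_mem_cyl {w : List α} {x : ℕ → α} :
    occursIn w x ↔ ∃ i, shift^[i] x ∈ cyl w.get := by
  simp only [iterate_shift_mem_cyl_get_iff, occursIn, ofFn_eq_map_range']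

lemma setOf_occursIn (w : List α) :
    {x : ℕ → α | occursIn w x} = ⋃ i, shift^[i] ⁻¹' cyl w.get := by
  ext x
  rw [Set.mem_iUnion]
  exact occursIn_iff_exists_iterate_mem_cyl

lemma occursIn_of_occursIn_shift {w : List α} {x : ℕ → α} (h : occursIn w (shift x)) :
    occursIn w x := by
  obtain ⟨i, hi⟩ := occursIn_iff_exists_iterate_mem_cyl.1 h
  exact occursIn_iff_exists_iterate_mem_cyl.2 ⟨i + 1, hi⟩

lemma exists_append_mem_lang {X : Set (ℕ → α)} {x : ℕ → α} (hx : x ∈ X) {u w : List α}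
    (hu : x ∈ cyl u.get) (hw : occursIn w (shift^[u.length] x)) :
    ∃ v : List α, u ++ v ++ w ∈ lang X := by
  obtain ⟨j, hj⟩ := occursIn_iff_exists_iterate_mem_cyl.1 hw
  rw [← Function.iterate_add_apply, add_comm, iterate_shift_mem_cyl_get_iff] at hj
  have hu' := (iterate_shift_mem_cyl_get_iff u x 0).1 hu
  refine ⟨(List.range' u.length j).map x, x, hx, 0, ?_⟩
  rw [ofFn_eq_map_range']
  calc u ++ (List.range' u.length j).map x ++ w
      = (List.range' 0 (u.length + j + w.length)).map x := by
        rw [← List.range'_append_1, ← List.range'_append_1, List.map_append, List.map_append,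
          zero_add, zero_add, ← hu', ← hj]
    _ = _ := by simp [add_assoc]

lemma exists_mem_Msigma_absolutelyContinuous [MeasurableSpace α] {X : Set (ℕ → α)}
    {μ₁ μ₂ : ProbabilityMeasure (ℕ → α)} (h₁ : μ₁ ∈ Msigma X) (h₂ : μ₂ ∈ Msigma X) :
    ∃ μ ∈ Msigma X, (μ₁ : Measure (ℕ → α)) ≪ (μ : Measure (ℕ → α)) ∧
      (μ₂ : Measure (ℕ → α)) ≪ (μ : Measure (ℕ → α)) := by
  set m : Measure (ℕ → α) := (2 : ENNReal)⁻¹ • ((μ₁ : Measure (ℕ → α)) + (μ₂ : Measure (ℕ → α)))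
    with hm
  have hone : ∀ s, (μ₁ : Measure (ℕ → α)) s = 1 → (μ₂ : Measure (ℕ → α)) s = 1 → m s = 1 := by
    intro s hs₁ hs₂
    rw [hm, Measure.smul_apply, Measure.add_apply, hs₁, hs₂, one_add_one_eq_two, smul_eq_mul,
      ENNReal.inv_mul_cancel two_ne_zero ENNReal.ofNat_ne_top]
  have hac : (μ₁ : Measure (ℕ → α)) + (μ₂ : Measure (ℕ → α)) ≪ m :=
    Measure.absolutelyContinuous_smul (ENNReal.inv_ne_zero.2 ENNReal.ofNat_ne_top)
  refine ⟨⟨m, ⟨hone _ measure_univ measure_univ⟩⟩, mem_Msigma_iff.2 ⟨?_,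
    hone X (mem_Msigma_iff.1 h₁).2 (mem_Msigma_iff.1 h₂).2⟩, ?_, ?_⟩
  · change m.map shift = m
    rw [hm, Measure.map_smul, Measure.map_add _ _ measurable_shift, h₁.1, h₂.1]
  · exact (Measure.le_add_right le_rfl).absolutelyContinuous.trans hac
  · exact (Measure.le_add_left le_rfl).absolutelyContinuous.trans hac

lemma IsMeasureCenter.mem_Msigma [TopologicalSpace α] [MeasurableSpace α] {X C : Set (ℕ → α)}
    (hC : IsMeasureCenter X C) {μ : ProbabilityMeasure (ℕ → α)} (hμ : μ ∈ Msigma X) :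
    μ ∈ Msigma C :=
  ⟨hμ.1, hC.2.2.1 μ hμ⟩

section Topology

variable [TopologicalSpace α]

lemma ShiftSpace.iterate_mem {X : Set (ℕ → α)} (hX : ShiftSpace X) {x : ℕ → α} (hx : x ∈ X)
    (i : ℕ) : shift^[i] x ∈ X :=
  Set.MapsTo.iterate hX.2.2 i hx

variable [DiscreteTopology α]

lemma isOpen_setOf_occursIn (w : List α) : IsOpen {x : ℕ → α | occursIn w x} := by
  rw [setOf_occursIn]
  exact isOpen_iUnion fun i => (isClopen_cyl _).isOpen.preimage (continuous_shift.iterate i)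

lemma ShiftSpace.sdiff_setOf_occursIn {X : Set (ℕ → α)} (hX : ShiftSpace X) {w : List α}
    {y : ℕ → α} (hy : y ∈ X) (hwy : ¬ occursIn w y) : ShiftSpace (X \ {x | occursIn w x}) :=
  ⟨⟨y, hy, hwy⟩, hX.2.1.sdiff (isOpen_setOf_occursIn w),
    fun z hz => ⟨hX.2.2 z hz.1, fun h => hz.2 (occursIn_of_occursIn_shift h)⟩⟩

end Topology

variable [MeasurableSpace α] [MeasurableSingletonClass α]

lemma measure_setOf_occursIn_eq_zero {μ : ProbabilityMeasure (ℕ → α)} (hμ : invariantPM μ)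
    {w : List α} (h : (μ : Measure (ℕ → α)) (cyl w.get) = 0) :
    (μ : Measure (ℕ → α)) {x | occursIn w x} = 0 := by
  rw [setOf_occursIn]
  refine measure_iUnion_null fun i => ?_
  rw [(hμ.measurePreserving.iterate i).measure_preimage
    (measurableSet_cyl _).nullMeasurableSet, h]

lemma measurableSet_setOf_occursIn (w : List α) : MeasurableSet {x : ℕ → α | occursIn w x} := by
  rw [setOf_occursIn]
  exact MeasurableSet.iUnion fun i => measurable_shift.iterate i (measurableSet_cyl _)

lemma ErgodicPM.ae_occursIn {ν : ProbabilityMeasure (ℕ → α)} (hν : ErgodicPM ν) {w : List α}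
    (hw : (ν : Measure (ℕ → α)) (cyl w.get) ≠ 0) :
    ∀ᵐ x ∂(ν : Measure (ℕ → α)), occursIn w x := by
  rcases hν.ae_empty_or_univ_of_preimage_ae_le (measurableSet_setOf_occursIn w).nullMeasurableSet
    (ae_of_all _ fun x hx => occursIn_of_occursIn_shift hx) with hempty | huniv
  · have hsub : cyl w.get ⊆ {x | occursIn w x} :=
      fun x hx => occursIn_iff_exists_iterate_mem_cyl.2 ⟨0, hx⟩
    exact absurd (measure_mono_null hsub (ae_eq_empty.1 hempty)) hw
  · exact eventuallyEq_univ.1 huniv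

variable [TopologicalSpace α] [DiscreteTopology α] {X C : Set (ℕ → α)}

namespace IsMeasureCenter

lemma exists_measure_cyl_ne_zero_of_not_occursIn (hC : IsMeasureCenter X C) {w : List α}
    (hw : w ∈ lang C) {y : ℕ → α} (hy : y ∈ C) (hwy : ¬ occursIn w y) :
    ∃ μ ∈ Msigma X, (μ : Measure (ℕ → α)) (cyl w.get) ≠ 0 := by
  by_contra! hnull
  have hfull : ∀ μ ∈ Msigma X, μ (C \ {x | occursIn w x}) = 1 := by
    intro μ hμ
    have hsdiff := measure_sdiff_null (s := C) (measure_setOf_occursIn_eq_zero hμ.1 (hnull μ hμ))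
    exact (mem_Msigma_iff.2
      ⟨hμ.1, hsdiff.trans (mem_Msigma_iff.1 (hC.mem_Msigma hμ)).2⟩).2
  obtain ⟨x, hx, hwx⟩ := hw
  exact (hC.2.2.2 _ (hC.1.sdiff_setOf_occursIn hy hwy) (Set.sdiff_subset.trans hC.2.1) hfull hx).2
    hwx

lemma exists_measure_cyl_ne_zero (hC : IsMeasureCenter X C) (hne : (Msigma X).Nonempty)
    {w : List α} (hw : w ∈ lang C) :
    ∃ μ ∈ Msigma X, (μ : Measure (ℕ → α)) (cyl w.get) ≠ 0 := by
  by_cases hall : ∀ y ∈ C, occursIn w y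
  · obtain ⟨μ, hμ⟩ := hne
    refine ⟨μ, hμ, fun hnull => one_ne_zero (α := ENNReal) ?_⟩
    rw [← (mem_Msigma_iff.1 (hC.mem_Msigma hμ)).2]
    exact measure_mono_null hall (measure_setOf_occursIn_eq_zero hμ.1 hnull)
  · push Not at hall
    obtain ⟨y, hy, hwy⟩ := hall
    exact hC.exists_measure_cyl_ne_zero_of_not_occursIn hw hy hwy

variable [Countable α]

lemma exists_append_mem_lang (hC : IsMeasureCenter X C) {ν : ProbabilityMeasure (ℕ → α)}
    (hν : ν ∈ Msigma X) (herg : ErgodicPM ν) {u w : List α}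
    (hu : (ν : Measure (ℕ → α)) (cyl u.get) ≠ 0) (hw : (ν : Measure (ℕ → α)) (cyl w.get) ≠ 0) :
    ∃ v : List α, u ++ v ++ w ∈ lang C := by
  have hwν : ∀ᵐ x ∂(ν : Measure (ℕ → α)), occursIn w (shift^[u.length] x) :=
    (hν.1.measurePreserving.iterate u.length).quasiMeasurePreserving.ae (herg.ae_occursIn hw)
  have hCν : ∀ᵐ x ∂(ν : Measure (ℕ → α)), x ∈ C :=
    (prob_compl_eq_zero_iff hC.1.2.1.measurableSet).2 (mem_Msigma_iff.1 (hC.mem_Msigma hν)).2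
  obtain ⟨x, hxu, hxw, hxC⟩ :=
    ((frequently_ae_mem_iff.2 hu).and_eventually (hwν.and hCν)).exists
  exact DbarPaper.exists_append_mem_lang hxC hxu hxw

lemma transitiveShift (hC : IsMeasureCenter X C)
    (hdense : Msigma X ⊆ closure {ν ∈ Msigma X | ErgodicPM ν}) : TransitiveShift C := by
  intro u hu w hw
  by_cases hall : ∀ y ∈ C, occursIn w y
  · obtain ⟨x, hx, hux⟩ := hu
    obtain ⟨i, hi⟩ := occursIn_iff_exists_iterate_mem_cyl.1 hux
    have hxi := hC.1.iterate_mem hx i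
    exact DbarPaper.exists_append_mem_lang hxi hi (hall _ (hC.1.iterate_mem hxi _))
  push Not at hall
  obtain ⟨y, hy, hwy⟩ := hall
  obtain ⟨μ₂, hμ₂, hμ₂w⟩ := hC.exists_measure_cyl_ne_zero_of_not_occursIn hw hy hwy
  obtain ⟨μ₁, hμ₁, hμ₁u⟩ := hC.exists_measure_cyl_ne_zero ⟨μ₂, hμ₂⟩ hu
  obtain ⟨μ, hμ, hac₁, hac₂⟩ := exists_mem_Msigma_absolutelyContinuous hμ₁ hμ₂
  have hopen (v : List α) : IsOpen {ν : ProbabilityMeasure (ℕ → α) |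
      (ν : Measure (ℕ → α)) (cyl v.get) ≠ 0} :=
    isOpen_ne_fun (continuous_measure_of_isClopen (isClopen_cyl _)) continuous_const
  obtain ⟨ν, ⟨hνu, hνw⟩, hν, herg⟩ := mem_closure_iff.1 (hdense hμ) _
    ((hopen u).inter (hopen w)) ⟨fun h => hμ₁u (hac₁ h), fun h => hμ₂w (hac₂ h)⟩
  exact hC.exists_append_mem_lang hν herg hνu hνw

end IsMeasureCenter

end Transitivity

lemma EntropyDense.subset_closure {α : Type} [Fintype α] [TopologicalSpace α] [DiscreteTopology α]
    [MeasurableSpace α] [MeasurableSingletonClass α] {X : Set (ℕ → α)} (hX : EntropyDense X) :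
    Msigma X ⊆ closure {ν ∈ Msigma X | ErgodicPM ν} := fun μ hμ =>
  mem_closure_iff.2 fun U hU hμU => by
    obtain ⟨ν, hν, hνU, herg, -⟩ := hX μ hμ U hU hμU 1 one_pos
    exact ⟨ν, hνU, hν, herg⟩

theorem statement6_general {α : Type} [Fintype α] [TopologicalSpace α] [DiscreteTopology α]
    [MeasurableSpace α] [MeasurableSingletonClass α] {X C : Set (ℕ → α)} (hX : IsClosed X)
    (hstab : DbarMStable X) (hC : IsMeasureCenter X C) : TransitiveShift C ∧ EntropyDense X :=
  have hdense := hstab.entropyDense hX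
  ⟨hC.transitiveShift hdense.subset_closure, hdense⟩

/-- if `X` is `d̄_M`-stable then its measure center is transitive and the
ergodic measures are entropy dense in `M_σ(X)`. -/
theorem statement6 (hA : 2 ≤ Fintype.card A) (X C : Set (ℕ → A)) (hX : ShiftSpace X)
    (hstab : DbarMStable X) (hC : IsMeasureCenter X C) :
    TransitiveShift C ∧ EntropyDense X :=
  statement6_general hX.2.1 hstab hC

end DbarPaper
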